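/- Let 1 < p ≤ q < ∞, α/n = 1/p − 1/q, and φ, ψ ∈ Φ_w(ℝⁿ) be such that φ⁻¹(x,t) ≈ t^{α/n}·ψ⁻¹(x,t). Let r ∈ (α/n, 1/p] and assume φ satisfies (A0), (A1), (A2), (aInc)_p and (aDec)_{1/r}. Then the fractional maximal operator M_α is bounded from L^φ(ℝⁿ) to L^ψ(ℝⁿ): there is a constant C with ‖M_α f‖_{L^ψ(ℝⁿ)} ≤ C‖f‖_{L^φ(ℝⁿ)} for all f ∈ L^φ(ℝⁿ). -/

import Mathlib

open MeasureTheory NNReal ENNReal Filter Set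

noncomputable section

/-- `ℝⁿ` with the Euclidean structure. -/
abbrev RSp (n : ℕ) := EuclideanSpace ℝ (Fin n)

variable {n : ℕ}

/-- A cube in `ℝⁿ` with sides parallel to the coordinate axes,
with center `c` and side length `2r`. -/
structure Cube (n : ℕ) where
  c : RSp n
  r : ℝ
  r_pos : 0 < r

/-- The underlying set of a cube. -/
def Cube.set (Q : Cube n) : Set (RSp n) := {y | ∀ i, |y i - Q.c i| ≤ Q.r}

/-- A weak Φ-function on `Ω` (the class `Φ_w(Ω)`). -/
structure IsWeakPhi (Ω : Set (RSp n)) (φ : RSp n → ℝ≥0 → ℝ≥0∞) : Prop where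
  meas : ∀ f : RSp n → ℝ≥0, Measurable f →
    AEMeasurable (fun x => φ x (f x)) (volume.restrict Ω)
  mono : ∀ x ∈ Ω, Monotone (φ x)
  zero : ∀ x ∈ Ω, φ x 0 = 0
  lim_zero : ∀ x ∈ Ω, Tendsto (fun t : ℝ≥0 => φ x t) (nhdsWithin 0 (Set.Ioi 0)) (nhds 0)
  lim_top : ∀ x ∈ Ω, Tendsto (fun t : ℝ≥0 => φ x t) atTop (nhds ∞)
  almost_inc : ∃ L : ℝ≥0, 1 ≤ L ∧ ∀ x ∈ Ω, ∀ s t : ℝ≥0, 0 < s → s < t →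
    φ x s / (s : ℝ≥0∞) ≤ (L : ℝ≥0∞) * (φ x t / (t : ℝ≥0∞))

/-- A convex Φ-function on `Ω` (the class `Φ_c(Ω)`): a weak Φ-function which is
additionally convex and left-continuous in `t` for a.e. `x ∈ Ω`. -/
structure IsConvexPhi (Ω : Set (RSp n)) (φ : RSp n → ℝ≥0 → ℝ≥0∞)
    extends IsWeakPhi Ω φ : Prop where
  convex : ∀ᵐ x ∂(volume.restrict Ω), ∀ s t a b : ℝ≥0, a + b = 1 →
    φ x (a * s + b * t) ≤ (a : ℝ≥0∞) * φ x s + (b : ℝ≥0∞) * φ x t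
  left_cont : ∀ᵐ x ∂(volume.restrict Ω), ∀ t : ℝ≥0,
    Tendsto (φ x) (nhdsWithin t (Set.Iio t)) (nhds (φ x t))

/-- A strong Φ-function on `Ω` (the class `Φ_s(Ω)`): a weak Φ-function which is
additionally convex and continuous into `[0,∞]` for a.e. `x ∈ Ω`. -/
structure IsStrongPhi (Ω : Set (RSp n)) (φ : RSp n → ℝ≥0 → ℝ≥0∞)
    extends IsWeakPhi Ω φ : Prop where
  convex : ∀ᵐ x ∂(volume.restrict Ω), ∀ s t a b : ℝ≥0, a + b = 1 →
    φ x (a * s + b * t) ≤ (a : ℝ≥0∞) * φ x s + (b : ℝ≥0∞) * φ x t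
  cont : ∀ᵐ x ∂(volume.restrict Ω), Continuous (φ x)

/-- The generalized (left-)inverse `φ⁻¹(x,t) = inf {τ ≥ 0 : φ(x,τ) ≥ t}`. -/
def phiInv (φ : RSp n → ℝ≥0 → ℝ≥0∞) (x : RSp n) (t : ℝ≥0∞) : ℝ≥0∞ :=
  sInf ((fun s : ℝ≥0 => (s : ℝ≥0∞)) '' {s : ℝ≥0 | t ≤ φ x s})

/-- The condition `(aInc)_p` on `Ω`: `t ↦ φ(x,t)/t^p` is almost increasing, uniformly in `x`. -/
def AInc (p : ℝ) (Ω : Set (RSp n)) (φ : RSp n → ℝ≥0 → ℝ≥0∞) : Prop :=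
  ∃ L : ℝ≥0, 1 ≤ L ∧ ∀ x ∈ Ω, ∀ s t : ℝ≥0, 0 < s → s < t →
    φ x s / (s : ℝ≥0∞) ^ p ≤ (L : ℝ≥0∞) * (φ x t / (t : ℝ≥0∞) ^ p)

/-- The condition `(aDec)_q` on `Ω`: `t ↦ φ(x,t)/t^q` is almost decreasing, uniformly in `x`. -/
def ADec (q : ℝ) (Ω : Set (RSp n)) (φ : RSp n → ℝ≥0 → ℝ≥0∞) : Prop :=
  ∃ L : ℝ≥0, 1 ≤ L ∧ ∀ x ∈ Ω, ∀ s t : ℝ≥0, 0 < s → s < t →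
    φ x t / (t : ℝ≥0∞) ^ q ≤ (L : ℝ≥0∞) * (φ x s / (s : ℝ≥0∞) ^ q)

/-- The condition `(A0)` on `Ω`: `β ≤ φ⁻¹(x,1) ≤ 1/β` for a.e. `x ∈ Ω`. -/
def A0 (Ω : Set (RSp n)) (φ : RSp n → ℝ≥0 → ℝ≥0∞) : Prop :=
  ∃ β : ℝ≥0, 0 < β ∧ β ≤ 1 ∧ ∀ᵐ x ∂(volume.restrict Ω),
    (β : ℝ≥0∞) ≤ phiInv φ x 1 ∧ phiInv φ x 1 ≤ (β : ℝ≥0∞)⁻¹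

/-- The condition `(A1)` (on all of `ℝⁿ`). -/
def A1 (φ : RSp n → ℝ≥0 → ℝ≥0∞) : Prop :=
  ∃ β : ℝ≥0, 0 < β ∧ β < 1 ∧ ∀ Q : Cube n, volume Q.set ≤ 1 →
    ∀ᵐ x ∂(volume.restrict Q.set), ∀ᵐ y ∂(volume.restrict Q.set),
      ∀ t : ℝ≥0∞, 1 ≤ t → t ≤ (volume Q.set)⁻¹ →
        (β : ℝ≥0∞) * phiInv φ x t ≤ phiInv φ y t

/-- The condition `(A2)` (on all of `ℝⁿ`). -/
def A2 (φ : RSp n → ℝ≥0 → ℝ≥0∞) : Prop :=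
  ∃ φi : ℝ≥0 → ℝ≥0∞, IsWeakPhi Set.univ (fun _ : RSp n => φi) ∧
  ∃ h : RSp n → ℝ≥0∞, (∫⁻ x, h x) < ∞ ∧ (∃ M : ℝ≥0, ∀ᵐ x ∂(volume : Measure (RSp n)), h x ≤ M) ∧
  ∃ β : ℝ≥0, 0 < β ∧ β ≤ 1 ∧ ∃ s : ℝ≥0, 0 < s ∧
    ∀ᵐ x ∂(volume : Measure (RSp n)), ∀ t : ℝ≥0,
      (φi t ≤ (s : ℝ≥0∞) → φ x (β * t) ≤ φi t + h x) ∧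
      (φ x t ≤ (s : ℝ≥0∞) → φi (β * t) ≤ φ x t + h x)

/-- Membership in the generalized Orlicz space `L^φ(Ω)`. -/
def MemOrlicz (φ : RSp n → ℝ≥0 → ℝ≥0∞) (Ω : Set (RSp n)) (f : RSp n → ℝ) : Prop :=
  AEMeasurable f (volume.restrict Ω) ∧
  ∃ lam : ℝ≥0, 0 < lam ∧ (∫⁻ x in Ω, φ x (lam * ‖f x‖₊) ∂volume) < ∞

/-- The Luxemburg (quasi)norm of `L^φ(Ω)`. -/
def orliczNorm (φ : RSp n → ℝ≥0 → ℝ≥0∞) (Ω : Set (RSp n)) (f : RSp n → ℝ) : ℝ≥0∞ :=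
  sInf ((fun lam : ℝ≥0 => (lam : ℝ≥0∞)) ''
    {lam : ℝ≥0 | 0 < lam ∧ (∫⁻ x in Ω, φ x (‖f x‖₊ / lam) ∂volume) ≤ 1})

/-- The canonical extension of `φ(x,·)` to `[0,∞]`. -/
def phiE (φ : RSp n → ℝ≥0 → ℝ≥0∞) (x : RSp n) (t : ℝ≥0∞) : ℝ≥0∞ :=
  ⨆ (s : ℝ≥0) (_ : (s : ℝ≥0∞) ≤ t), φ x s

/-- The Luxemburg (quasi)norm for `[0,∞]`-valued functions. -/
def orliczNormE (φ : RSp n → ℝ≥0 → ℝ≥0∞) (Ω : Set (RSp n)) (g : RSp n → ℝ≥0∞) : ℝ≥0∞ :=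
  sInf ((fun lam : ℝ≥0 => (lam : ℝ≥0∞)) ''
    {lam : ℝ≥0 | 0 < lam ∧ (∫⁻ x in Ω, phiE φ x (g x / (lam : ℝ≥0∞)) ∂volume) ≤ 1})

/-- The average `b_Q` of `b` over the cube `Q`. -/
def cubeAvg (Q : Cube n) (b : RSp n → ℝ) : ℝ := ⨍ x in Q.set, b x

/-- The BMO seminorm `‖b‖_*`. -/
def bmoNorm (b : RSp n → ℝ) : ℝ≥0∞ :=
  ⨆ Q : Cube n, (volume Q.set)⁻¹ * ∫⁻ x in Q.set, ‖b x - cubeAvg Q b‖₊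

/-- `b ∈ BMO(ℝⁿ)`. -/
def IsBMO (b : RSp n → ℝ) : Prop := LocallyIntegrable b volume ∧ bmoNorm b < ∞

/-- The non-centred Hardy–Littlewood maximal function (over axes-parallel cubes). -/
def maximal (f : RSp n → ℝ) (x : RSp n) : ℝ≥0∞ :=
  ⨆ (Q : Cube n) (_ : x ∈ Q.set), (volume Q.set)⁻¹ * ∫⁻ y in Q.set, (‖f y‖₊ : ℝ≥0∞) ∂volume

/-- The fractional maximal function `M_α`. -/
def fracMaximal (α : ℝ) (f : RSp n → ℝ) (x : RSp n) : ℝ≥0∞ :=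
  ⨆ (Q : Cube n) (_ : x ∈ Q.set),
    volume Q.set ^ (α / (n : ℝ) - 1) * ∫⁻ y in Q.set, (‖f y‖₊ : ℝ≥0∞) ∂volume

/-- The maximal function restricted to subcubes of `Q₀`. -/
def restMaximal (Q₀ : Cube n) (f : RSp n → ℝ) (x : RSp n) : ℝ≥0∞ :=
  ⨆ (Q : Cube n) (_ : x ∈ Q.set) (_ : Q.set ⊆ Q₀.set),
    (volume Q.set)⁻¹ * ∫⁻ y in Q.set, (‖f y‖₊ : ℝ≥0∞) ∂volume

/-- The fractional maximal function restricted to subcubes of `Q₀`. -/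
def restFracMaximal (α : ℝ) (Q₀ : Cube n) (f : RSp n → ℝ) (x : RSp n) : ℝ≥0∞ :=
  ⨆ (Q : Cube n) (_ : x ∈ Q.set) (_ : Q.set ⊆ Q₀.set),
    volume Q.set ^ (α / (n : ℝ) - 1) * ∫⁻ y in Q.set, (‖f y‖₊ : ℝ≥0∞) ∂volume

/-- The sharp maximal function `M♯`. -/
def sharpMaximal (f : RSp n → ℝ) (x : RSp n) : ℝ≥0∞ :=
  ⨆ (Q : Cube n) (_ : x ∈ Q.set),
    (volume Q.set)⁻¹ * ∫⁻ y in Q.set, (‖f y - ⨍ z in Q.set, f z‖₊ : ℝ≥0∞) ∂volume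

/-- The maximal commutator `M_b`. -/
def maximalComm (b f : RSp n → ℝ) (x : RSp n) : ℝ≥0∞ :=
  ⨆ (Q : Cube n) (_ : x ∈ Q.set),
    (volume Q.set)⁻¹ * ∫⁻ y in Q.set, (‖b x - b y‖₊ : ℝ≥0∞) * (‖f y‖₊ : ℝ≥0∞) ∂volume

/-- The fractional maximal commutator `M_{b,α}`. -/
def fracMaximalComm (α : ℝ) (b f : RSp n → ℝ) (x : RSp n) : ℝ≥0∞ :=
  ⨆ (Q : Cube n) (_ : x ∈ Q.set),
    volume Q.set ^ (α / (n : ℝ) - 1) *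
      ∫⁻ y in Q.set, (‖b x - b y‖₊ : ℝ≥0∞) * (‖f y‖₊ : ℝ≥0∞) ∂volume

/-- The commutator `[M,b]f = M(bf) − b·Mf` of the maximal operator. -/
def maximalCommutator (b f : RSp n → ℝ) (x : RSp n) : ℝ :=
  (maximal (fun y => b y * f y) x).toReal - b x * (maximal f x).toReal

/-- The commutator `[M_α,b]f = M_α(bf) − b·M_α f` of the fractional maximal operator. -/
def fracMaximalCommutator (α : ℝ) (b f : RSp n → ℝ) (x : RSp n) : ℝ :=
  (fracMaximal α (fun y => b y * f y) x).toReal - b x * (fracMaximal α f x).toReal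

/-- The Riesz potential `I_α f`. -/
def riesz (α : ℝ) (f : RSp n → ℝ) (x : RSp n) : ℝ :=
  ∫ y, f y / dist x y ^ ((n : ℝ) - α)

/-- The commutator `[I_α, b]f = I_α(bf) − b·I_α f` of the Riesz potential. -/
def rieszCommutator (α : ℝ) (b f : RSp n → ℝ) (x : RSp n) : ℝ :=
  riesz α (fun y => b y * f y) x - b x * riesz α f x

/-- The operator `I_{b,α} f(x) = ∫ |b(x)−b(y)|·|x−y|^{α−n} f(y) dy`. -/
def rieszAbs (α : ℝ) (b f : RSp n → ℝ) (x : RSp n) : ℝ :=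
  ∫ y, |b x - b y| / dist x y ^ ((n : ℝ) - α) * f y

/-- Equivalence `φ ≃ ψ` of Φ-functions. -/
def PhiEquiv (φ ψ : RSp n → ℝ≥0 → ℝ≥0∞) : Prop :=
  ∃ L : ℝ≥0, 1 ≤ L ∧ ∀ x : RSp n, ∀ t : ℝ≥0, ψ x (t / L) ≤ φ x t ∧ φ x t ≤ ψ x (L * t)

/-- Weak equivalence `φ ∼ ψ` of Φ-functions. -/
def PhiWeakEquiv (φ ψ : RSp n → ℝ≥0 → ℝ≥0∞) : Prop :=
  ∃ L : ℝ≥0, 1 ≤ L ∧ ∃ h : RSp n → ℝ≥0∞, (∫⁻ x, h x) < ∞ ∧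
    ∀ᵐ x ∂(volume : Measure (RSp n)), ∀ t : ℝ≥0,
      ψ x t ≤ φ x (L * t) + h x ∧ φ x t ≤ ψ x (L * t) + h x

/-- The relation `φ⁻¹(x,t) ≈ t^{α/n}·ψ⁻¹(x,t)` with constants independent of `x` and `t > 0`. -/
def FracInvRel (α : ℝ) (φ ψ : RSp n → ℝ≥0 → ℝ≥0∞) : Prop :=
  ∃ c₁ c₂ : ℝ≥0, 0 < c₁ ∧ ∀ x : RSp n, ∀ t : ℝ≥0, 0 < t →
    (c₁ : ℝ≥0∞) * ((t : ℝ≥0∞) ^ (α / (n : ℝ)) * phiInv ψ x t) ≤ phiInv φ x t ∧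
    phiInv φ x t ≤ (c₂ : ℝ≥0∞) * ((t : ℝ≥0∞) ^ (α / (n : ℝ)) * phiInv ψ x t)

/-- The characteristic function of a cube, as a real-valued function. -/
def cubeIndicator (Q : Cube n) : RSp n → ℝ := Q.set.indicator 1

end

/-!
Let `h` be the integrable error function of the regularity conditions on `φ`, let
`F = φ(·, |f|) + h`, and let `w` be the power mean of `F` over a cube `Q` with exponent `1/p`.
The regularity conditions make `φ⁻¹(x, V)` and `φ⁻¹(y, V)` comparable for `x, y ∈ Q` at the level
`V = w + h(x) + h(y)`. Since `φ⁻¹(x, t) ≈ t ^ (α/n) ψ⁻¹(x, t)`, the condition `(aInc)_p` then gives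
`|f(y)| ≲ ψ⁻¹(x, w + h(x)) w ^ (α/n) (1 + (F(y)/w) ^ (1/p))`. Averaging over `y ∈ Q` removes the
last factor, and `w |Q| ≤ ∫ F` bounds `|Q| ^ (α/n) w ^ (α/n)`, so that
`|Q| ^ (α/n - 1) ∫_Q |f| ≲ ψ⁻¹(x, w + h(x))`. Finally `w ≤ (M(F ^ (1/p))(x)) ^ p`, which is
integrable because the Hardy–Littlewood maximal operator `M` is bounded on `L ^ p`.
-/

namespace Cube

variable {n : ℕ} (Q : Cube n)

theorem set_eq_preimage_Icc :
    Q.set = (WithLp.ofLp : RSp n → Fin n → ℝ) ⁻¹'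
      Icc (fun i => Q.c i - Q.r) (fun i => Q.c i + Q.r) := by
  ext y
  simp only [Cube.set, mem_ofPred_eq, mem_preimage, mem_Icc, Pi.le_def, abs_sub_le_iff,
    sub_le_iff_le_add', forall_and, add_comm Q.r]
  exact and_comm

theorem measurableSet_set : MeasurableSet Q.set := by
  rw [set_eq_preimage_Icc]
  exact (isClosed_Icc.preimage (PiLp.continuous_ofLp 2 _)).measurableSet

theorem volume_set : volume Q.set = ENNReal.ofReal (2 * Q.r) ^ n := by
  have side_length (i : Fin n) : Q.c i + Q.r - (Q.c i - Q.r) = 2 * Q.r := by ring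
  rw [set_eq_preimage_Icc, (PiLp.volume_preserving_ofLp (Fin n)).measure_preimage
    measurableSet_Icc.nullMeasurableSet, Real.volume_Icc_pi]
  simp only [side_length, Finset.prod_const, Finset.card_univ, Fintype.card_fin]

theorem volume_set_ne_zero : volume Q.set ≠ 0 := by
  simp [volume_set, Q.r_pos]

theorem volume_set_ne_top : volume Q.set ≠ ∞ := by
  rw [volume_set]
  finiteness

theorem r_le_of_volume_le (hn : 0 < n) {B : ℝ≥0∞} (hB : B ≠ ∞) (h : volume Q.set ≤ B) :
    Q.r ≤ 1 + B.toReal := by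
  by_contra! hr
  have hB0 : 0 ≤ B.toReal := ENNReal.toReal_nonneg
  have side_le : 2 * Q.r ≤ (2 * Q.r) ^ n := le_self_pow₀ (by linarith) hn.ne'
  rw [volume_set, ← ENNReal.ofReal_pow (by linarith), ENNReal.ofReal_le_iff_le_toReal hB] at h
  linarith

/-- The concentric dilate of a cube by a factor `k`. -/
def scale (k : ℝ) (hk : 0 < k) : Cube n :=
  ⟨Q.c, k * Q.r, mul_pos hk Q.r_pos⟩

theorem volume_scale (k : ℝ) (hk : 0 < k) :
    volume (Q.scale k hk).set = ENNReal.ofReal k ^ n * volume Q.set := by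
  rw [volume_set, volume_set, ← mul_pow, ← ENNReal.ofReal_mul hk.le, scale, mul_left_comm]

variable {Q}

theorem ball_subset_scale {x : RSp n} (hx : x ∈ Q.set) (k : ℝ) (hk : 0 < k) :
    Metric.ball x ((k - 1) * Q.r) ⊆ (Q.scale k hk).set := by
  intro y hy i
  have hyx : |y i - x i| ≤ (k - 1) * Q.r :=
    (PiLp.norm_apply_le (y - x) i).trans (mem_ball_iff_norm.1 hy).le
  calc |y i - Q.c i| ≤ |y i - x i| + |x i - Q.c i| := abs_sub_le _ _ _
    _ ≤ (k - 1) * Q.r + Q.r := add_le_add hyx (hx i)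
    _ = k * Q.r := by ring

variable (Q)

theorem center_mem : Q.c ∈ Q.set := fun i => by simp [Q.r_pos.le]

theorem interior_nonempty : (interior Q.set).Nonempty := by
  refine ⟨Q.c, mem_interior_iff_mem_nhds.2 <| mem_of_superset (Metric.ball_mem_nhds _ Q.r_pos) ?_⟩
  intro y hy i
  exact (PiLp.norm_apply_le (y - Q.c) i).trans (mem_ball_iff_norm.1 hy).le

theorem exists_countable_disjoint_subfamily {t : Set (Cube n)} {R : ℝ} (hR : ∀ Q ∈ t, Q.r ≤ R) :
    ∃ u ⊆ t, u.Countable ∧ u.PairwiseDisjoint Cube.set ∧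
      ⋃ Q ∈ t, Q.set ⊆ ⋃ Q ∈ u, (Q.scale 5 (by norm_num)).set := by
  obtain ⟨u, hut, hdisj, hcov⟩ := Vitali.exists_disjoint_subfamily_covering_enlargement
    Cube.set t Cube.r 2 one_lt_two (fun Q _ => Q.r_pos.le) R hR fun Q _ => ⟨Q.c, Q.center_mem⟩
  refine ⟨u, hut, hdisj.countable_of_nonempty_interior fun Q _ => Q.interior_nonempty, hdisj,
    iUnion₂_subset fun Q hQ x hx => ?_⟩
  obtain ⟨Q', hQ', ⟨y, hyQ, hyQ'⟩, hr⟩ := hcov Q hQ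
  refine mem_iUnion₂.2 ⟨Q', hQ', fun i => ?_⟩
  have h₁ := abs_sub_le_iff.1 (hx i)
  have h₂ := abs_sub_le_iff.1 (hyQ i)
  have h₃ := abs_sub_le_iff.1 (hyQ' i)
  simp only [scale]
  exact abs_sub_le_iff.2 ⟨by linarith, by linarith⟩

theorem volume_biUnion_le_of_volume_le (hn : 0 < n) (ν : Measure (RSp n)) [IsFiniteMeasure ν]
    {t : Set (Cube n)} (ht : ∀ Q ∈ t, volume Q.set ≤ ν Q.set) :
    volume (⋃ Q ∈ t, Q.set) ≤ 5 ^ n * ν univ := by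
  obtain ⟨u, hut, hcount, hdisj, hcov⟩ := exists_countable_disjoint_subfamily fun Q hQ =>
    Q.r_le_of_volume_le hn (measure_ne_top ν univ) ((ht Q hQ).trans (measure_mono (subset_univ _)))
  calc volume (⋃ Q ∈ t, Q.set)
      ≤ volume (⋃ Q ∈ u, (Q.scale 5 (by norm_num)).set) := measure_mono hcov
    _ ≤ ∑' Q : u, volume ((Q : Cube n).scale 5 (by norm_num)).set := measure_biUnion_le _ hcount _
    _ = 5 ^ n * ∑' Q : u, volume (Q : Cube n).set := by
      simp only [volume_scale, ENNReal.tsum_mul_left, ENNReal.ofReal_ofNat]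
    _ ≤ 5 ^ n * ∑' Q : u, ν (Q : Cube n).set := by
      gcongr 5 ^ n * ?_
      exact ENNReal.tsum_le_tsum fun Q => ht Q (hut Q.2)
    _ = 5 ^ n * ν (⋃ Q ∈ u, Q.set) := by
      rw [measure_biUnion hcount hdisj fun Q _ => Q.measurableSet_set]
    _ ≤ 5 ^ n * ν univ := by gcongr; exact subset_univ _

end Cube

section HardyLittlewood

variable {n : ℕ}

theorem lt_maximal_iff {f : RSp n → ℝ} {l : ℝ≥0∞} {x : RSp n} :
    l < maximal f x ↔
      ∃ Q : Cube n, x ∈ Q.set ∧ l < (volume Q.set)⁻¹ * ∫⁻ y in Q.set, (‖f y‖₊ : ℝ≥0∞) := by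
  simp only [maximal, lt_iSup_iff, exists_prop]

theorem laverage_le_maximal (f : RSp n → ℝ) {Q : Cube n} {x : RSp n} (hx : x ∈ Q.set) :
    (volume Q.set)⁻¹ * ∫⁻ y in Q.set, (‖f y‖₊ : ℝ≥0∞) ≤ maximal f x :=
  le_iSup₂ (f := fun (Q : Cube n) (_ : x ∈ Q.set) =>
    (volume Q.set)⁻¹ * ∫⁻ y in Q.set, (‖f y‖₊ : ℝ≥0∞)) Q hx

theorem lowerSemicontinuous_maximal (f : RSp n → ℝ) : LowerSemicontinuous (maximal f) := by
  intro x l hl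
  obtain ⟨Q, hxQ, hQ⟩ := lt_maximal_iff.1 hl
  set A := (volume Q.set)⁻¹ * ∫⁻ y in Q.set, (‖f y‖₊ : ℝ≥0∞) with hA
  have dilate_avg : Tendsto (fun k : ℝ => (ENNReal.ofReal k ^ n)⁻¹ * A) (nhdsWithin 1 (Ioi 1))
      (nhds A) := by
    have hpow : Tendsto (fun k : ℝ => (ENNReal.ofReal k ^ n)⁻¹) (nhds 1) (nhds 1) := by
      have : Continuous fun k : ℝ => (ENNReal.ofReal k ^ n)⁻¹ :=
        ((ENNReal.continuous_pow n).comp ENNReal.continuous_ofReal).inv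
      simpa using this.tendsto 1
    simpa using ENNReal.Tendsto.mul_const (hpow.mono_left nhdsWithin_le_nhds) (b := A)
      (Or.inl one_ne_zero)
  obtain ⟨k, hlk, hk : 1 < k⟩ :=
    ((dilate_avg.eventually (lt_mem_nhds hQ)).and self_mem_nhdsWithin).exists
  have hk0 : 0 < k := one_pos.trans hk
  have hball : Metric.ball x ((k - 1) * Q.r) ∈ nhds x :=
    Metric.ball_mem_nhds x (mul_pos (sub_pos.2 hk) Q.r_pos)
  filter_upwards [hball] with y hy
  refine lt_maximal_iff.2 ⟨Q.scale k hk0, Cube.ball_subset_scale hxQ k hk0 hy, hlk.trans_le ?_⟩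
  have hQk : Q.set ⊆ (Q.scale k hk0).set := fun z hz i =>
    (hz i).trans (le_mul_of_one_le_left Q.r_pos.le hk.le)
  rw [hA, Q.volume_scale, ENNReal.mul_inv (by simp [hk0]) (Or.inr Q.volume_set_ne_zero), mul_assoc]
  gcongr

theorem volume_lt_maximal_le (hn : 0 < n) (f : RSp n → ℝ) {l : ℝ≥0∞} (hl : l ≠ 0) (hl' : l ≠ ∞) :
    volume {x | l < maximal f x} ≤ 5 ^ n * (l⁻¹ * ∫⁻ x, (‖f x‖₊ : ℝ≥0∞)) := by
  set I := ∫⁻ x, (‖f x‖₊ : ℝ≥0∞)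
  rcases eq_or_ne I ∞ with hItop | hItop
  · simp [hItop, hl']
  set ν : Measure (RSp n) := l⁻¹ • volume.withDensity fun x => (‖f x‖₊ : ℝ≥0∞)
  have hν (s : Set (RSp n)) : ν s = l⁻¹ * ∫⁻ x in s, (‖f x‖₊ : ℝ≥0∞) := by
    simp only [ν, Measure.smul_apply, withDensity_apply', smul_eq_mul]
  have hν_univ : ν univ = l⁻¹ * I := by rw [hν, Measure.restrict_univ]
  have : IsFiniteMeasure ν :=
    ⟨hν_univ ▸ ENNReal.mul_lt_top (ENNReal.inv_lt_top.2 (pos_iff_ne_zero.2 hl)) hItop.lt_top⟩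
  have superlevel : {x | l < maximal f x} =
      ⋃ Q ∈ {Q : Cube n | l < (volume Q.set)⁻¹ * ∫⁻ y in Q.set, (‖f y‖₊ : ℝ≥0∞)}, Q.set := by
    ext x
    simp only [mem_ofPred_eq, lt_maximal_iff, mem_iUnion, exists_prop, and_comm]
  rw [superlevel, ← hν_univ]
  refine Cube.volume_biUnion_le_of_volume_le hn ν fun Q hQ => ?_
  have hQ' : l * volume Q.set ≤ ∫⁻ y in Q.set, (‖f y‖₊ : ℝ≥0∞) := by
    rw [mem_ofPred_eq, mul_comm, ← div_eq_mul_inv] at hQ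
    exact ENNReal.mul_le_of_le_div hQ.le
  rwa [hν, mul_comm l⁻¹, ← div_eq_mul_inv, ENNReal.le_div_iff_mul_le (Or.inl hl) (Or.inl hl'),
    mul_comm]

theorem maximal_le_maximal_indicator_add (f : RSp n → ℝ) (l : ℝ≥0∞) (x : RSp n) :
    maximal f x ≤ maximal ({y | l < (‖f y‖₊ : ℝ≥0∞)}.indicator f) x + l := by
  set g := {y | l < (‖f y‖₊ : ℝ≥0∞)}.indicator f
  have hfg (y : RSp n) : (‖f y‖₊ : ℝ≥0∞) ≤ (‖g y‖₊ : ℝ≥0∞) + l := by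
    by_cases hy : l < (‖f y‖₊ : ℝ≥0∞)
    · simp [g, Set.indicator_of_mem (show y ∈ {y | l < (‖f y‖₊ : ℝ≥0∞)} from hy)]
    · exact (not_lt.1 hy).trans le_add_self
  refine iSup₂_le fun Q hx => ?_
  calc (volume Q.set)⁻¹ * ∫⁻ y in Q.set, (‖f y‖₊ : ℝ≥0∞)
      ≤ (volume Q.set)⁻¹ * ∫⁻ y in Q.set, ((‖g y‖₊ : ℝ≥0∞) + l) := by gcongr with y; exact hfg y
    _ = (volume Q.set)⁻¹ * (∫⁻ y in Q.set, (‖g y‖₊ : ℝ≥0∞)) + l := by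
      rw [lintegral_add_right _ measurable_const, setLIntegral_const, mul_add, mul_left_comm,
        ENNReal.inv_mul_cancel Q.volume_set_ne_zero Q.volume_set_ne_top, mul_one]
    _ ≤ maximal g x + l := by gcongr; exact laverage_le_maximal g hx

theorem volume_lt_maximal_le_setLIntegral (hn : 0 < n) (f : RSp n → ℝ) {t : ℝ} (ht : 0 < t) :
    volume {x | ENNReal.ofReal t < maximal f x} ≤
      2 * 5 ^ n * (ENNReal.ofReal t)⁻¹ * ∫⁻ x in {x | t < 2 * ‖f x‖}, (‖f x‖₊ : ℝ≥0∞) := by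
  set l := ENNReal.ofReal (t / 2)
  have hl : l ≠ 0 := by simp [l, ht]
  have two_mul_l : ENNReal.ofReal t = l + l := by
    rw [← ENNReal.ofReal_add (by positivity) (by positivity), add_halves]
  have level : {x | l < (‖f x‖₊ : ℝ≥0∞)} = {x | t < 2 * ‖f x‖} := by
    ext x
    simp only [mem_ofPred_eq, l, ← enorm_eq_nnnorm, ← ofReal_norm]
    rw [ENNReal.ofReal_lt_ofReal_iff_of_nonneg (by positivity), div_lt_iff₀' two_pos]
  set g := {x | t < 2 * ‖f x‖}.indicator f
  have hsub : {x | ENNReal.ofReal t < maximal f x} ⊆ {x | l < maximal g x} := by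
    intro x (hx : ENNReal.ofReal t < maximal f x)
    rw [two_mul_l] at hx
    have := hx.trans_le (maximal_le_maximal_indicator_add f l x)
    rw [level] at this
    exact lt_of_add_lt_add_right this
  calc volume {x | ENNReal.ofReal t < maximal f x}
      ≤ 5 ^ n * (l⁻¹ * ∫⁻ x, (‖g x‖₊ : ℝ≥0∞)) :=
        (measure_mono hsub).trans (volume_lt_maximal_le hn g hl ENNReal.ofReal_ne_top)
    _ ≤ 5 ^ n * (l⁻¹ * ∫⁻ x in {x | t < 2 * ‖f x‖}, (‖f x‖₊ : ℝ≥0∞)) := by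
      gcongr 5 ^ n * (l⁻¹ * ?_)
      simp only [g, ← enorm_eq_nnnorm, enorm_indicator_eq_indicator_enorm]
      exact lintegral_indicator_le _ _
    _ = _ := by
      have inv_l : l⁻¹ = 2 * (ENNReal.ofReal t)⁻¹ := by
        rw [two_mul_l, ← two_mul, ENNReal.mul_inv (by simp) (by simp), ← mul_assoc,
          ENNReal.mul_inv_cancel two_ne_zero ofNat_ne_top, one_mul]
      rw [inv_l]
      ring

end HardyLittlewood

section WeakTypeToStrong

variable {X : Type*} [MeasurableSpace X]

theorem lintegral_rpow_eq_iSup_lintegral_min_rpow (μ : Measure X) {g : X → ℝ≥0∞}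
    (hg : AEMeasurable g μ) {p : ℝ} (hp : 0 < p) :
    ∫⁻ x, g x ^ p ∂μ = ⨆ k : ℕ, ∫⁻ x, min (g x) k ^ p ∂μ := by
  have truncation (x : X) : g x ^ p = ⨆ k : ℕ, min (g x) k ^ p := by
    have := (ENNReal.orderIsoRpow p hp).map_iSup fun k : ℕ => g x ⊓ (k : ℝ≥0∞)
    rwa [← inf_iSup_eq, ENNReal.iSup_natCast, inf_top_eq] at this
  simp only [truncation]
  exact lintegral_iSup' (fun k => (hg.min aemeasurable_const).pow_const p) <|
    ae_of_all _ fun x i j hij => by dsimp only; gcongr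

theorem lintegral_min_rpow_le (μ : Measure X) {g : X → ℝ≥0∞} (hg : AEMeasurable g μ) (k : ℕ)
    {p : ℝ} (hp : 0 < p) :
    ∫⁻ x, min (g x) k ^ p ∂μ ≤ ENNReal.ofReal p *
      ∫⁻ t in Ioi 0, μ {x | ENNReal.ofReal t < g x} * ENNReal.ofReal (t ^ (p - 1)) := by
  have min_ne_top (x : X) : min (g x) k ≠ ∞ := ne_top_of_le_ne_top (by simp) (min_le_right _ _)
  calc ∫⁻ x, min (g x) k ^ p ∂μ
      = ∫⁻ x, ENNReal.ofReal ((min (g x) k).toReal ^ p) ∂μ := by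
        simp only [← ENNReal.ofReal_rpow_of_nonneg ENNReal.toReal_nonneg hp.le,
          ENNReal.ofReal_toReal (min_ne_top _)]
    _ = ENNReal.ofReal p * ∫⁻ t in Ioi 0, μ {x | t < (min (g x) k).toReal} *
          ENNReal.ofReal (t ^ (p - 1)) :=
        lintegral_rpow_eq_lintegral_meas_lt_mul μ (ae_of_all _ fun _ => ENNReal.toReal_nonneg)
          (hg.min aemeasurable_const).ennreal_toReal hp
    _ ≤ _ := by
        refine mul_le_mul_right (setLIntegral_mono' measurableSet_Ioi fun t ht =>
          mul_le_mul_left (measure_mono fun x hx => ?_) _) _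
        exact ((ENNReal.ofReal_lt_iff_lt_toReal (le_of_lt ht) (min_ne_top x)).2 hx).trans_le
          (min_le_left _ _)

theorem lintegral_rpow_le_of_meas_lt_le {μ ν : Measure X} {g : X → ℝ≥0∞} (hg : AEMeasurable g μ)
    {u : X → ℝ} (hu : AEMeasurable u ν) (hu0 : 0 ≤ u) {p : ℝ} (hp : 1 < p) {C : ℝ≥0}
    (h : ∀ t : ℝ, 0 < t → μ {x | ENNReal.ofReal t < g x} ≤
      C * (ENNReal.ofReal t)⁻¹ * ν {x | t < u x}) :
    ∫⁻ x, g x ^ p ∂μ ≤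
      C * ENNReal.ofReal (p / (p - 1)) * ∫⁻ x, ENNReal.ofReal (u x ^ (p - 1)) ∂ν := by
  have hp0 : 0 < p := one_pos.trans hp
  have hp1 : 0 < p - 1 := sub_pos.2 hp
  rw [lintegral_rpow_eq_iSup_lintegral_min_rpow μ hg hp0]
  refine iSup_le fun k => (lintegral_min_rpow_le μ hg k hp0).trans ?_
  have tail_bound : ∀ t ∈ Ioi (0 : ℝ),
      μ {x | ENNReal.ofReal t < g x} * ENNReal.ofReal (t ^ (p - 1)) ≤
        C * (ν {x | t < u x} * ENNReal.ofReal (t ^ (p - 1 - 1))) := by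
    intro t (ht : 0 < t)
    calc μ {x | ENNReal.ofReal t < g x} * ENNReal.ofReal (t ^ (p - 1))
        ≤ C * (ENNReal.ofReal t)⁻¹ * ν {x | t < u x} * ENNReal.ofReal (t ^ (p - 1)) := by
          gcongr
          exact h t ht
      _ = C * (ν {x | t < u x} * ENNReal.ofReal (t ^ (p - 1 - 1))) := by
          rw [Real.rpow_sub_one ht.ne' (p - 1), div_eq_inv_mul, ENNReal.ofReal_mul (by positivity),
            ENNReal.ofReal_inv_of_pos ht]
          ring
  calc ENNReal.ofReal p * ∫⁻ t in Ioi 0, μ {x | ENNReal.ofReal t < g x} *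
          ENNReal.ofReal (t ^ (p - 1))
      ≤ ENNReal.ofReal p *
          ∫⁻ t in Ioi 0, C * (ν {x | t < u x} * ENNReal.ofReal (t ^ (p - 1 - 1))) := by
        gcongr 1
        exact setLIntegral_mono' measurableSet_Ioi tail_bound
    _ = ENNReal.ofReal p * (C *
          ∫⁻ t in Ioi 0, ν {x | t < u x} * ENNReal.ofReal (t ^ (p - 1 - 1))) := by
        rw [lintegral_const_mul' _ _ ENNReal.coe_ne_top]
    _ = C * ENNReal.ofReal (p / (p - 1)) * (ENNReal.ofReal (p - 1) *
          ∫⁻ t in Ioi 0, ν {x | t < u x} * ENNReal.ofReal (t ^ (p - 1 - 1))) := by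
        have : ENNReal.ofReal p = ENNReal.ofReal (p / (p - 1)) * ENNReal.ofReal (p - 1) := by
          rw [← ENNReal.ofReal_mul (by positivity), div_mul_cancel₀ _ hp1.ne']
        rw [this]
        ring
    _ = _ := by
        rw [lintegral_rpow_eq_lintegral_meas_lt_mul ν (ae_of_all _ hu0) hu hp1]

end WeakTypeToStrong

section

variable {n : ℕ}

theorem exists_lintegral_maximal_rpow_le (hn : 0 < n) {p : ℝ} (hp : 1 < p) :
    ∃ C : ℝ≥0, ∀ f : RSp n → ℝ, AEMeasurable f volume →
      ∫⁻ x, maximal f x ^ p ≤ C * ∫⁻ x, (‖f x‖₊ : ℝ≥0∞) ^ p := by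
  refine ⟨2 * 5 ^ n * Real.toNNReal (p / (p - 1)) * Real.toNNReal (2 ^ (p - 1)), fun f hf => ?_⟩
  set ν : Measure (RSp n) := volume.withDensity fun x => (‖f x‖₊ : ℝ≥0∞)
  have hp1 : 0 < p - 1 := sub_pos.2 hp
  have two_norm : AEMeasurable (fun x => 2 * ‖f x‖) volume := by fun_prop
  have weak_type : ∀ t : ℝ, 0 < t → volume {x | ENNReal.ofReal t < maximal f x} ≤
      (2 * 5 ^ n : ℝ≥0) * (ENNReal.ofReal t)⁻¹ * ν {x | t < 2 * ‖f x‖} := fun t ht => by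
    simpa [ν, withDensity_apply'] using volume_lt_maximal_le_setLIntegral hn f ht
  have density (x : RSp n) : (‖f x‖₊ : ℝ≥0∞) * ENNReal.ofReal ((2 * ‖f x‖) ^ (p - 1)) =
      ENNReal.ofReal (2 ^ (p - 1)) * (‖f x‖₊ : ℝ≥0∞) ^ p := by
    have split : (‖f x‖₊ : ℝ≥0∞) ^ p = ‖f x‖₊ * (‖f x‖₊ : ℝ≥0∞) ^ (p - 1) := by
      nth_rw 2 [← ENNReal.rpow_one (‖f x‖₊ : ℝ≥0∞)]
      rw [← ENNReal.rpow_add_of_nonneg _ _ zero_le_one hp1.le, add_sub_cancel]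
    rw [split, Real.mul_rpow two_pos.le (norm_nonneg _), ENNReal.ofReal_mul (by positivity),
      ← ENNReal.ofReal_rpow_of_nonneg (norm_nonneg _) hp1.le, ofReal_norm, enorm_eq_nnnorm]
    ring
  calc ∫⁻ x, maximal f x ^ p
      ≤ (2 * 5 ^ n : ℝ≥0) * ENNReal.ofReal (p / (p - 1)) *
          ∫⁻ x, ENNReal.ofReal ((2 * ‖f x‖) ^ (p - 1)) ∂ν :=
        lintegral_rpow_le_of_meas_lt_le (lowerSemicontinuous_maximal f).measurable.aemeasurable
          (two_norm.mono_ac (withDensity_absolutelyContinuous _ _))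
          (fun x => by positivity) hp weak_type
    _ = (2 * 5 ^ n : ℝ≥0) * ENNReal.ofReal (p / (p - 1)) *
          (ENNReal.ofReal (2 ^ (p - 1)) * ∫⁻ x, (‖f x‖₊ : ℝ≥0∞) ^ p) := by
        rw [lintegral_withDensity_eq_lintegral_mul₀ (by fun_prop) (by fun_prop)]
        simp only [Pi.mul_apply, density]
        rw [lintegral_const_mul' _ _ ENNReal.ofReal_ne_top]
    _ = _ := by
        push_cast
        simp only [ENNReal.ofReal, mul_assoc]

end

/-- The conditions that a weak Φ-function imposes on each of its sections `t ↦ φ(x,t)`, apart from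
the almost increasing condition. -/
structure IsPhi (Φ : ℝ≥0 → ℝ≥0∞) : Prop where
  mono : Monotone Φ
  zero : Φ 0 = 0
  tendsto_top : Tendsto Φ atTop (nhds ∞)

theorem IsWeakPhi.isPhi {n : ℕ} {φ : RSp n → ℝ≥0 → ℝ≥0∞} (hφ : IsWeakPhi univ φ) (x : RSp n) :
    IsPhi (φ x) :=
  ⟨hφ.mono x (mem_univ x), hφ.zero x (mem_univ x), hφ.lim_top x (mem_univ x)⟩

theorem IsWeakPhi.aemeasurable {n : ℕ} {φ : RSp n → ℝ≥0 → ℝ≥0∞} (hφ : IsWeakPhi univ φ)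
    {f : RSp n → ℝ≥0} (hf : AEMeasurable f volume) : AEMeasurable (fun x => φ x (f x)) volume := by
  have h := hφ.meas (hf.mk f) hf.measurable_mk
  rw [Measure.restrict_univ] at h
  exact h.congr (hf.ae_eq_mk.mono fun x hx => by simp only [hx])

/-- The left inverse of a single Φ-function at a finite level, where it is finite; see
`IsPhi.coe_leftInv` for the relation to `phiInv`. -/
noncomputable def leftInv (Φ : ℝ≥0 → ℝ≥0∞) (t : ℝ≥0) : ℝ≥0 :=
  sInf {s | (t : ℝ≥0∞) ≤ Φ s}

/-- `t ↦ Φ(t) / t ^ p` is `L`-almost increasing: the condition `(aInc)_p` for a single Φ-function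
with an explicit constant. -/
def AlmostInc (p : ℝ) (L : ℝ≥0) (Φ : ℝ≥0 → ℝ≥0∞) : Prop :=
  ∀ s t : ℝ≥0, 0 < s → s < t → Φ s / (s : ℝ≥0∞) ^ p ≤ L * (Φ t / (t : ℝ≥0∞) ^ p)

section LeftInverse

variable {Φ : ℝ≥0 → ℝ≥0∞} {s t : ℝ≥0}

theorem leftInv_le (h : (t : ℝ≥0∞) ≤ Φ s) : leftInv Φ t ≤ s :=
  csInf_le (OrderBot.bddBelow _) h

theorem lt_of_lt_leftInv (h : s < leftInv Φ t) : Φ s < t :=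
  lt_of_not_ge fun hc => h.not_ge (leftInv_le hc)

namespace IsPhi

theorem exists_le (hΦ : IsPhi Φ) (t : ℝ≥0) : {s : ℝ≥0 | (t : ℝ≥0∞) ≤ Φ s}.Nonempty :=
  (hΦ.tendsto_top.eventually (le_mem_nhds ENNReal.coe_lt_top)).exists

theorem coe_leftInv (hΦ : IsPhi Φ) (t : ℝ≥0) :
    (leftInv Φ t : ℝ≥0∞) = sInf ((fun s : ℝ≥0 => (s : ℝ≥0∞)) '' {s : ℝ≥0 | (t : ℝ≥0∞) ≤ Φ s}) := by
  rw [leftInv, ENNReal.coe_sInf (hΦ.exists_le t), sInf_image]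

theorem le_of_leftInv_lt (hΦ : IsPhi Φ) (h : leftInv Φ t < s) : (t : ℝ≥0∞) ≤ Φ s := by
  obtain ⟨u, hu, hus⟩ := (csInf_lt_iff (OrderBot.bddBelow _) (hΦ.exists_le t)).1 h
  exact le_trans hu (hΦ.mono hus.le)

theorem le_leftInv (hΦ : IsPhi Φ) (h : Φ s < t) : s ≤ leftInv Φ t :=
  le_of_not_gt fun hc => h.not_ge (hΦ.le_of_leftInv_lt hc)

theorem leftInv_mono (hΦ : IsPhi Φ) : Monotone (leftInv Φ) := fun _ _ h =>
  le_of_forall_gt_imp_ge_of_dense fun _ hs =>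
    leftInv_le ((ENNReal.coe_le_coe.2 h).trans (hΦ.le_of_leftInv_lt hs))

end IsPhi

namespace AlmostInc

variable {p : ℝ} {L : ℝ≥0}

theorem rpow_mul_le (hinc : AlmostInc p L Φ) (hp : 0 ≤ p) (hL : 1 ≤ L) {c : ℝ≥0} (hc : 1 ≤ c)
    (hs : 0 < s) : (c : ℝ≥0∞) ^ p * Φ s ≤ L * Φ (c * s) := by
  rcases hc.eq_or_lt with rfl | hc
  · simpa using le_mul_of_one_le_left zero_le (ENNReal.one_le_coe_iff.2 hL)
  have hsp : (s : ℝ≥0∞) ^ p ≠ 0 := by simp [ENNReal.rpow_eq_zero_iff, hs.ne']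
  have hsp' : (s : ℝ≥0∞) ^ p ≠ ∞ := ENNReal.rpow_ne_top_of_nonneg hp ENNReal.coe_ne_top
  have hcp : (c : ℝ≥0∞) ^ p ≠ 0 := by
    simp [ENNReal.rpow_eq_zero_iff, (one_pos.trans hc).ne']
  have hcp' : (c : ℝ≥0∞) ^ p ≠ ∞ := ENNReal.rpow_ne_top_of_nonneg hp ENNReal.coe_ne_top
  have h := hinc s (c * s) hs (lt_mul_of_one_lt_left hs hc)
  rw [ENNReal.coe_mul, ENNReal.mul_rpow_of_nonneg _ _ hp, ← mul_div_assoc, mul_comm (_ ^ p) (_ ^ p),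
    ENNReal.div_le_iff hsp hsp'] at h
  calc (c : ℝ≥0∞) ^ p * Φ s
      ≤ (c : ℝ≥0∞) ^ p * (L * Φ (c * s) / ((s : ℝ≥0∞) ^ p * (c : ℝ≥0∞) ^ p) * (s : ℝ≥0∞) ^ p) := by
        gcongr
    _ = L * Φ (c * s) / ((s : ℝ≥0∞) ^ p * (c : ℝ≥0∞) ^ p) * ((s : ℝ≥0∞) ^ p * (c : ℝ≥0∞) ^ p) := by
        ring
    _ = L * Φ (c * s) := ENNReal.div_mul_cancel (mul_ne_zero hsp hcp) (ENNReal.mul_ne_top hsp' hcp')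

theorem leftInv_mul_le (hinc : AlmostInc p L Φ) (hΦ : IsPhi Φ) (hp : 0 < p) (hL : 1 ≤ L) {l : ℝ≥0}
    (hl : 1 ≤ l) (t : ℝ≥0) : leftInv Φ (l * t) ≤ (L * l) ^ (1 / p) * leftInv Φ t := by
  set c := (L * l) ^ (1 / p)
  have hc : 1 ≤ c := NNReal.one_le_rpow (one_le_mul hL hl) (by positivity)
  have hcp : (c : ℝ≥0∞) ^ p = L * l := by
    rw [← ENNReal.coe_rpow_of_nonneg _ hp.le, ← NNReal.rpow_mul, one_div_mul_cancel hp.ne',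
      NNReal.rpow_one, ENNReal.coe_mul]
  have hc0 : 0 < c := one_pos.trans_le hc
  refine (div_le_iff₀' hc0).1 (le_of_forall_gt_imp_ge_of_dense fun s hs => (div_le_iff₀' hc0).2 ?_)
  have hts : (t : ℝ≥0∞) ≤ Φ s := hΦ.le_of_leftInv_lt hs
  have hLl : (L : ℝ≥0∞) * (l * Φ s) ≤ L * Φ (c * s) := by
    simpa only [hcp, mul_assoc] using hinc.rpow_mul_le hp.le hL hc (zero_le.trans_lt hs)
  have hl_le : l * Φ s ≤ Φ (c * s) :=
    (ENNReal.mul_le_mul_iff_right (by simpa using (one_pos.trans_le hL).ne')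
      ENNReal.coe_ne_top).1 hLl
  refine leftInv_le (le_trans ?_ hl_le)
  rw [ENNReal.coe_mul]
  gcongr

end AlmostInc

end LeftInverse

section Comparison

/-- One half of `(A2)` for single Φ-functions: `Ψ(βt) ≤ Φ(t) + h` as long as `Φ(t) ≤ s`. -/
def ShiftLe (Φ Ψ : ℝ≥0 → ℝ≥0∞) (β s : ℝ≥0) (h : ℝ≥0∞) : Prop :=
  ∀ t : ℝ≥0, Φ t ≤ s → Ψ (β * t) ≤ Φ t + h

variable {Φ Ψ : ℝ≥0 → ℝ≥0∞} {p : ℝ} {L β s : ℝ≥0}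

theorem ShiftLe.mul_leftInv_le {h V : ℝ≥0} (hshift : ShiftLe Φ Ψ β s h) (hΨ : IsPhi Ψ)
    (hV : h ≤ V) (hVs : V ≤ s) : β * leftInv Φ V ≤ leftInv Ψ (2 * V) := by
  rcases eq_or_ne β 0 with rfl | hβ
  · simp
  have hβ0 : 0 < β := pos_iff_ne_zero.2 hβ
  refine (le_div_iff₀' hβ0).1 (le_of_forall_lt_imp_le_of_dense fun τ hτ => (le_div_iff₀' hβ0).2 ?_)
  have hτV : Φ τ < V := lt_of_lt_leftInv hτ
  refine hΨ.le_leftInv ?_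
  calc Ψ (β * τ) ≤ Φ τ + h := hshift τ (hτV.le.trans (by exact_mod_cast hVs))
    _ < V + V := ENNReal.add_lt_add_of_lt_of_le ENNReal.coe_ne_top hτV (by exact_mod_cast hV)
    _ = (2 * V : ℝ≥0) := by rw [two_mul, ENNReal.coe_add]

/-- The conditions `(aInc)_p`, `(A0)` and `(A2)` at a single point, with explicit constants: `Φ` is
the section of the Φ-function at that point, `Φi` the Φ-function at infinity and `h` the value of
the perturbation in `(A2)`. -/
structure IsRegularPhi (p : ℝ) (L b β s : ℝ≥0) (Φi : ℝ≥0 → ℝ≥0∞) (Φ : ℝ≥0 → ℝ≥0∞) (h : ℝ≥0) :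
    Prop extends IsPhi Φ where
  almostInc : AlmostInc p L Φ
  le_leftInv_one : b ≤ leftInv Φ 1
  leftInv_one_le : leftInv Φ 1 ≤ b⁻¹
  shiftLe_infty : ShiftLe Φ Φi β s h
  infty_shiftLe : ShiftLe Φi Φ β s h

namespace IsRegularPhi

variable {b h k V : ℝ≥0} {Φi : ℝ≥0 → ℝ≥0∞}

theorem leftInv_le_of_two_mul_le (hΦ : IsRegularPhi p L b β s Φi Φ h)
    (hΨ : IsRegularPhi p L b β s Φi Ψ k) (hΦi : IsPhi Φi) (hp : 0 < p) (hL : 1 ≤ L) (hβ : 0 < β)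
    (hhV : h ≤ V) (hkV : k ≤ V) (hVs : 2 * V ≤ s) :
    leftInv Φ V ≤ (L * 4) ^ (1 / p) * (β * β)⁻¹ * leftInv Ψ V := by
  have hV2 : V ≤ 2 * V := le_mul_of_one_le_left zero_le one_le_two
  have to_infty : β * leftInv Φ V ≤ leftInv Φi (2 * V) :=
    hΦ.shiftLe_infty.mul_leftInv_le hΦi hhV (hV2.trans hVs)
  have from_infty : β * leftInv Φi (2 * V) ≤ leftInv Ψ (2 * (2 * V)) :=
    hΨ.infty_shiftLe.mul_leftInv_le hΨ.toIsPhi (hkV.trans hV2) hVs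
  calc leftInv Φ V = (β * β)⁻¹ * (β * (β * leftInv Φ V)) := by field_simp
    _ ≤ (β * β)⁻¹ * leftInv Ψ (4 * V) := by
        gcongr
        calc β * (β * leftInv Φ V) ≤ leftInv Ψ (2 * (2 * V)) :=
              (mul_le_mul_right to_infty β).trans from_infty
          _ = leftInv Ψ (4 * V) := by rw [← mul_assoc]; norm_num
    _ ≤ (β * β)⁻¹ * ((L * 4) ^ (1 / p) * leftInv Ψ V) := by
        gcongr
        exact hΨ.almostInc.leftInv_mul_le hΨ.toIsPhi hp hL (by norm_num) V
    _ = _ := by ring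

theorem leftInv_le_of_mem_Icc (hΦ : IsRegularPhi p L b β s Φi Φ h)
    (hΨ : IsRegularPhi p L b β s Φi Ψ k) (hp : 0 < p) (hL : 1 ≤ L) (hb : 0 < b)
    {σ N : ℝ≥0} (hσ : 0 < σ) (hσ1 : σ ≤ 1) (hN : 1 ≤ N) (hσV : σ ≤ V) (hVN : V ≤ N) :
    leftInv Φ V ≤ (L * N) ^ (1 / p) * b⁻¹ * b⁻¹ * (L * σ⁻¹) ^ (1 / p) * leftInv Ψ V := by
  have upper : leftInv Φ V ≤ (L * N) ^ (1 / p) * b⁻¹ :=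
    calc leftInv Φ V ≤ leftInv Φ (N * 1) := hΦ.leftInv_mono (by rwa [mul_one])
      _ ≤ (L * N) ^ (1 / p) * leftInv Φ 1 := hΦ.almostInc.leftInv_mul_le hΦ.toIsPhi hp hL hN 1
      _ ≤ (L * N) ^ (1 / p) * b⁻¹ := by gcongr; exact hΦ.leftInv_one_le
  have lower : b ≤ (L * σ⁻¹) ^ (1 / p) * leftInv Ψ V :=
    calc b ≤ leftInv Ψ (σ⁻¹ * σ) := by rw [inv_mul_cancel₀ hσ.ne']; exact hΨ.le_leftInv_one
      _ ≤ (L * σ⁻¹) ^ (1 / p) * leftInv Ψ σ :=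
        hΨ.almostInc.leftInv_mul_le hΨ.toIsPhi hp hL ((one_le_inv₀ hσ).2 hσ1) σ
      _ ≤ (L * σ⁻¹) ^ (1 / p) * leftInv Ψ V := by gcongr; exact hΨ.leftInv_mono hσV
  calc leftInv Φ V ≤ (L * N) ^ (1 / p) * b⁻¹ * (b⁻¹ * b) := by
        rwa [inv_mul_cancel₀ hb.ne', mul_one]
    _ ≤ (L * N) ^ (1 / p) * b⁻¹ * (b⁻¹ * ((L * σ⁻¹) ^ (1 / p) * leftInv Ψ V)) := by gcongr
    _ = _ := by ring

theorem exists_leftInv_le (hΦi : IsPhi Φi) (hp : 0 < p) (hL : 1 ≤ L) (hb : 0 < b) (hβ : 0 < β)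
    (hs : 0 < s) (N : ℝ≥0) :
    ∃ C : ℝ≥0, ∀ (Φ Ψ : ℝ≥0 → ℝ≥0∞) (h k V : ℝ≥0), IsRegularPhi p L b β s Φi Φ h →
      IsRegularPhi p L b β s Φi Ψ k → h ≤ V → k ≤ V → V ≤ N → leftInv Φ V ≤ C * leftInv Ψ V := by
  have hσ : 0 < min (s / 2) 1 := lt_min (by positivity) one_pos
  refine ⟨(L * 4) ^ (1 / p) * (β * β)⁻¹ +
    (L * max N 1) ^ (1 / p) * b⁻¹ * b⁻¹ * (L * (min (s / 2) 1)⁻¹) ^ (1 / p),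
    fun Φ Ψ h k V hΦ hΨ hhV hkV hVN => ?_⟩
  rw [add_mul]
  rcases le_total V (s / 2) with hV | hV
  · have hVs : 2 * V ≤ s := (le_div_iff₀' two_pos).1 hV
    exact (hΦ.leftInv_le_of_two_mul_le hΨ hΦi hp hL hβ hhV hkV hVs).trans le_self_add
  · exact (hΦ.leftInv_le_of_mem_Icc hΨ hp hL hb hσ (min_le_right _ _) (le_max_right _ _)
      ((min_le_left _ _).trans hV) (hVN.trans (le_max_left _ _))).trans le_add_self

end IsRegularPhi

theorem AlmostInc.leftInv_le_of_dyadic (hinc : AlmostInc p L Φ) (hΦ : IsPhi Φ) (hΨ : IsPhi Ψ)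
    (hp : 0 < p) (hL : 1 ≤ L) (hβ : 0 < β) {W : ℝ≥0∞}
    (hdyadic : ∀ k : ℕ, ((2 ^ k : ℝ≥0) : ℝ≥0∞) ≤ W → β * leftInv Φ (2 ^ k) ≤ leftInv Ψ (2 ^ k))
    {N V : ℝ≥0} (hN : 1 ≤ N) (hNV : N ≤ V) (hVW : (V : ℝ≥0∞) ≤ N * W) :
    leftInv Φ V ≤ (L * (2 * N)) ^ (1 / p) * β⁻¹ * leftInv Ψ V := by
  have hN0 : 0 < N := one_pos.trans_le hN
  obtain ⟨k, hk, hk'⟩ := exists_nat_pow_near ((one_le_div₀ hN0).2 hNV) (one_lt_two (α := ℝ≥0))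
  have hVk : V ≤ 2 * N * 2 ^ k := by
    calc V ≤ 2 ^ (k + 1) * N := ((div_lt_iff₀ hN0).1 hk').le
      _ = 2 * N * 2 ^ k := by ring
  have hkW : ((2 ^ k : ℝ≥0) : ℝ≥0∞) ≤ W := by
    refine (ENNReal.coe_le_coe.2 hk).trans ?_
    rw [ENNReal.coe_div hN0.ne']
    exact ENNReal.div_le_of_le_mul' hVW
  calc leftInv Φ V ≤ leftInv Φ (2 * N * 2 ^ k) := hΦ.leftInv_mono hVk
    _ ≤ (L * (2 * N)) ^ (1 / p) * leftInv Φ (2 ^ k) :=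
      hinc.leftInv_mul_le hΦ hp hL (one_le_mul one_le_two hN) _
    _ = (L * (2 * N)) ^ (1 / p) * (β⁻¹ * (β * leftInv Φ (2 ^ k))) := by field_simp
    _ ≤ (L * (2 * N)) ^ (1 / p) * (β⁻¹ * leftInv Ψ V) := by
      gcongr
      exact (hdyadic k hkW).trans (hΨ.leftInv_mono (hk.trans (div_le_self zero_le hN)))
    _ = _ := by ring

end Comparison

section MeasurablePerturbation

/-- The least perturbation for which the inequality in `ShiftLe` holds at all dyadic points. Unlike
an arbitrary admissible perturbation, it depends measurably on measurable data. -/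
noncomputable def dyadicDefect (Φ Ψ : ℝ≥0 → ℝ≥0∞) (β s : ℝ≥0) : ℝ≥0∞ :=
  ⨆ k : ℤ, if Φ (2 ^ k) ≤ s then Ψ (β * 2 ^ k) - Φ (2 ^ k) else 0

variable {Φ Ψ : ℝ≥0 → ℝ≥0∞} {β s : ℝ≥0}

theorem ShiftLe.dyadicDefect_le {h : ℝ≥0∞} (hshift : ShiftLe Φ Ψ β s h) :
    dyadicDefect Φ Ψ β s ≤ h := by
  refine iSup_le fun k => ?_
  split_ifs with hk
  · exact tsub_le_iff_left.2 (hshift _ hk)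
  · exact zero_le

theorem shiftLe_dyadicDefect (hΦ : IsPhi Φ) (hΨ : IsPhi Ψ) :
    ShiftLe Φ Ψ (β / 2) s (dyadicDefect Φ Ψ β s) := by
  intro t ht
  rcases eq_or_ne t 0 with rfl | ht0
  · simp [hΨ.zero]
  obtain ⟨k, hk, hk'⟩ := exists_mem_Ico_zpow (pos_iff_ne_zero.2 ht0) (one_lt_two (α := ℝ≥0))
  have half_mul_le : β / 2 * t ≤ β * 2 ^ k := by
    calc β / 2 * t ≤ β / 2 * 2 ^ (k + 1) := by gcongr
      _ = β * 2 ^ k := by rw [zpow_add_one₀ two_ne_zero]; field_simp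
  have defect_le : Ψ (β * 2 ^ k) - Φ (2 ^ k) ≤ dyadicDefect Φ Ψ β s := by
    refine le_iSup_of_le k ?_
    rw [if_pos ((hΦ.mono hk).trans ht)]
  calc Ψ (β / 2 * t) ≤ Ψ (β * 2 ^ k) := hΨ.mono half_mul_le
    _ ≤ Φ (2 ^ k) + dyadicDefect Φ Ψ β s := tsub_le_iff_left.1 defect_le
    _ ≤ Φ t + dyadicDefect Φ Ψ β s := by gcongr; exact hΦ.mono hk

theorem ShiftLe.mono {h h' : ℝ≥0∞} (hshift : ShiftLe Φ Ψ β s h) (hh : h ≤ h') :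
    ShiftLe Φ Ψ β s h' :=
  fun t ht => (hshift t ht).trans (by gcongr)

variable {X : Type*} [MeasurableSpace X] {μ : Measure X}

theorem aemeasurable_dyadicDefect {φ ψ : X → ℝ≥0 → ℝ≥0∞}
    (hφ : ∀ t, AEMeasurable (fun x => φ x t) μ) (hψ : ∀ t, AEMeasurable (fun x => ψ x t) μ)
    (β s : ℝ≥0) : AEMeasurable (fun x => dyadicDefect (φ x) (ψ x) β s) μ := by
  refine AEMeasurable.iSup fun k => ?_
  have hcut : Measurable fun q : ℝ≥0∞ × ℝ≥0∞ => if q.1 ≤ s then q.2 - q.1 else 0 :=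
    Measurable.ite (measurableSet_le measurable_fst measurable_const) (by fun_prop) (by fun_prop)
  exact hcut.comp_aemeasurable ((hφ _).prodMk (hψ _))

theorem exists_pos_measurable_ge [SigmaFinite μ] {H : X → ℝ≥0∞} (hH : AEMeasurable H μ)
    (hint : ∫⁻ x, H x ∂μ ≠ ∞) {M : ℝ≥0} (hM : ∀ᵐ x ∂μ, H x ≤ M) :
    ∃ h : X → ℝ≥0, Measurable h ∧ (∀ x, 0 < h x) ∧ (∀ x, h x ≤ M + 1) ∧
      ∫⁻ x, (h x : ℝ≥0∞) ∂μ ≠ ∞ ∧ ∀ᵐ x ∂μ, H x ≤ h x := by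
  obtain ⟨g, gpos, gmeas, gint⟩ := exists_pos_lintegral_lt_of_sigmaFinite μ (ε := 1) one_ne_zero
  set H' : X → ℝ≥0 := fun x => (hH.mk H x).toNNReal
  have hH' : ∀ᵐ x ∂μ, (H' x : ℝ≥0∞) = H x := by
    filter_upwards [hM, hH.ae_eq_mk] with x hx hmk
    rw [← ENNReal.coe_toNNReal (ne_top_of_le_ne_top ENNReal.coe_ne_top hx), hmk]
  have hH'meas : Measurable H' := hH.measurable_mk.ennreal_toNNReal
  refine ⟨fun x => min (H' x) M + min (g x) 1, by fun_prop,
    fun x => (lt_min (gpos x) one_pos).trans_le le_add_self,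
    fun x => add_le_add (min_le_right _ _) (min_le_right _ _), ?_, ?_⟩
  · have hle : ∫⁻ x, ((min (H' x) M + min (g x) 1 : ℝ≥0) : ℝ≥0∞) ∂μ ≤
        ∫⁻ x, H x ∂μ + ∫⁻ x, (g x : ℝ≥0∞) ∂μ := by
      rw [← lintegral_add_right _ gmeas.coe_nnreal_ennreal]
      refine lintegral_mono_ae ?_
      filter_upwards [hH'] with x hx
      rw [ENNReal.coe_add, ← hx]
      gcongr <;> exact min_le_left _ _
    exact ne_top_of_le_ne_top (ENNReal.add_ne_top.2 ⟨hint, (gint.trans ENNReal.one_lt_top).ne⟩) hle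
  · filter_upwards [hM, hH'] with x hx hx'
    rw [← hx', ENNReal.coe_le_coe] at hx ⊢
    rw [min_eq_left hx]
    exact le_self_add

end MeasurablePerturbation

section Regularity

variable {n : ℕ} {φ : RSp n → ℝ≥0 → ℝ≥0∞}

theorem A2.exists_measurable_shiftLe (hφ : IsWeakPhi univ φ) (h2 : A2 φ) :
    ∃ h : RSp n → ℝ≥0, Measurable h ∧ (∀ x, 0 < h x) ∧ (∃ M : ℝ≥0, ∀ x, h x ≤ M) ∧
      ∫⁻ x, (h x : ℝ≥0∞) ≠ ∞ ∧ ∃ (Φi : ℝ≥0 → ℝ≥0∞) (β s : ℝ≥0), IsPhi Φi ∧ 0 < β ∧ 0 < s ∧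
        ∀ᵐ x, ShiftLe (φ x) Φi β s (h x) ∧ ShiftLe Φi (φ x) β s (h x) := by
  obtain ⟨Φi, hΦi, k, hk, ⟨M, hM⟩, β, hβ, -, s, hs, hshift⟩ := h2
  have hφt (t : ℝ≥0) : AEMeasurable (fun x => φ x t) volume :=
    hφ.aemeasurable (f := fun _ => t) aemeasurable_const
  let H : RSp n → ℝ≥0∞ := fun x =>
    max (dyadicDefect (φ x) Φi β s) (dyadicDefect Φi (φ x) β s)
  have hHmeas : AEMeasurable H volume :=
    (aemeasurable_dyadicDefect (ψ := fun _ => Φi) hφt (fun _ => aemeasurable_const) β s).max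
      (aemeasurable_dyadicDefect (φ := fun _ => Φi) (fun _ => aemeasurable_const) hφt β s)
  have hHk : ∀ᵐ x, H x ≤ k x := hshift.mono fun x hx =>
    max_le (ShiftLe.dyadicDefect_le (h := k x) fun t => (hx t).2)
      (ShiftLe.dyadicDefect_le (h := k x) fun t => (hx t).1)
  have hHint : ∫⁻ x, H x ≠ ∞ := ((lintegral_mono_ae hHk).trans_lt hk).ne
  obtain ⟨h, hmeas, hpos, hbdd, hint, hle⟩ := exists_pos_measurable_ge hHmeas hHint
    (hHk.mp (hM.mono fun x hx hx' => hx'.trans hx))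
  have hΦi' : IsPhi Φi := hΦi.isPhi 0
  refine ⟨h, hmeas, hpos, ⟨M + 1, hbdd⟩, hint, Φi, β / 2, s, hΦi', by positivity, hs, ?_⟩
  filter_upwards [hle] with x hx
  exact ⟨(shiftLe_dyadicDefect (hφ.isPhi x) hΦi').mono ((le_max_left _ _).trans hx),
    (shiftLe_dyadicDefect hΦi' (hφ.isPhi x)).mono ((le_max_right _ _).trans hx)⟩

theorem ae_ae_le_swap {X Y : Type*} [MeasurableSpace X] [MeasurableSpace Y] {μ : Measure X}
    {ν : Measure Y} {f : X → ℝ≥0∞} {g : Y → ℝ≥0∞} (h : ∀ᵐ x ∂μ, ∀ᵐ y ∂ν, f x ≤ g y) :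
    ∀ᵐ y ∂ν, ∀ᵐ x ∂μ, f x ≤ g y := by
  filter_upwards [ae_essInf_le (μ := ν) (f := g)] with y hy
  filter_upwards [h] with x hx
  exact (le_essInf_of_ae_le _ hx).trans hy

theorem A1.exists_dyadic (hφ : IsWeakPhi univ φ) (h1 : A1 φ) :
    ∃ β : ℝ≥0, 0 < β ∧ ∀ Q : Cube n, volume Q.set ≤ 1 →
      ∀ᵐ x ∂volume.restrict Q.set, ∀ᵐ z ∂volume.restrict Q.set, ∀ k : ℕ,
        ((2 ^ k : ℝ≥0) : ℝ≥0∞) ≤ (volume Q.set)⁻¹ →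
          β * leftInv (φ z) (2 ^ k) ≤ leftInv (φ x) (2 ^ k) := by
  obtain ⟨β, hβ, -, h1⟩ := h1
  refine ⟨β, hβ, fun Q hQ => ?_⟩
  have swapped (k : ℕ) (hk : ((2 ^ k : ℝ≥0) : ℝ≥0∞) ≤ (volume Q.set)⁻¹) :
      ∀ᵐ x ∂volume.restrict Q.set, ∀ᵐ z ∂volume.restrict Q.set,
        β * phiInv φ z (2 ^ k : ℝ≥0) ≤ phiInv φ x (2 ^ k : ℝ≥0) := by
    refine ae_ae_le_swap ?_
    filter_upwards [h1 Q hQ] with z hz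
    filter_upwards [hz] with x hx
    exact hx _ (by exact_mod_cast one_le_pow₀ (one_le_two (α := ℝ≥0))) hk
  have hall := ae_all_iff.2 fun k => ae_all_iff.2 (swapped k)
  filter_upwards [hall] with x hx
  filter_upwards [ae_all_iff.2 fun k => ae_all_iff.2 (hx k)] with z hz k hk
  have := hz k hk
  rwa [phiInv, phiInv, ← (hφ.isPhi z).coe_leftInv, ← (hφ.isPhi x).coe_leftInv, ← ENNReal.coe_mul,
    ENNReal.coe_le_coe] at this

/-- The perturbation `h` makes the inverses `φ⁻¹(x,V)` comparable for `x` in a cube `Q` at all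
levels `h ≤ V ≤ K(|Q|⁻¹ + 1)`, uniformly in `Q`. This is how `(A0)`, `(A1)`, `(A2)` and `(aInc)`
enter the estimate of averages. -/
def InvComparable (φ : RSp n → ℝ≥0 → ℝ≥0∞) (h : RSp n → ℝ≥0) : Prop :=
  ∀ K : ℝ≥0, 1 ≤ K → ∃ C : ℝ≥0, ∀ Q : Cube n,
    ∀ᵐ x ∂volume.restrict Q.set, ∀ᵐ z ∂volume.restrict Q.set, ∀ V : ℝ≥0,
      h x ≤ V → h z ≤ V → (V : ℝ≥0∞) ≤ K * ((volume Q.set)⁻¹ + 1) →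
        leftInv (φ z) V ≤ C * leftInv (φ x) V

theorem invComparable_of_isRegularPhi (hφ : IsWeakPhi univ φ) (h1 : A1 φ) {h : RSp n → ℝ≥0}
    {p : ℝ} {L b β s : ℝ≥0} {Φi : ℝ≥0 → ℝ≥0∞} (hΦi : IsPhi Φi) (hp : 0 < p) (hL : 1 ≤ L)
    (hb : 0 < b) (hβ : 0 < β) (hs : 0 < s)
    (hreg : ∀ᵐ x, IsRegularPhi p L b β s Φi (φ x) (h x)) : InvComparable φ h := by
  intro K hK
  obtain ⟨C, hC⟩ := IsRegularPhi.exists_leftInv_le hΦi hp hL hb hβ hs (2 * K)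
  obtain ⟨γ, hγ, h1⟩ := h1.exists_dyadic hφ
  refine ⟨C + (L * (2 * (2 * K))) ^ (1 / p) * γ⁻¹, fun Q => ?_⟩
  have hsmall : ∀ᵐ x ∂volume.restrict Q.set, ∀ᵐ z ∂volume.restrict Q.set, volume Q.set ≤ 1 →
      ∀ k : ℕ, ((2 ^ k : ℝ≥0) : ℝ≥0∞) ≤ (volume Q.set)⁻¹ →
        γ * leftInv (φ z) (2 ^ k) ≤ leftInv (φ x) (2 ^ k) := by
    by_cases hQ : volume Q.set ≤ 1
    · simpa only [hQ, true_imp_iff] using h1 Q hQ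
    · simp only [hQ, false_imp_iff, eventually_true]
  filter_upwards [hsmall, ae_restrict_of_ae hreg] with x hx hxreg
  filter_upwards [hx, ae_restrict_of_ae hreg] with z hxz hzreg V hxV hzV hV
  rw [add_mul]
  rcases le_total V (2 * K) with hVK | hVK
  · exact (hC _ _ _ _ V hzreg hxreg hzV hxV hVK).trans le_self_add
  have one_le_inv : 1 ≤ (volume Q.set)⁻¹ := by
    have hKV : (K : ℝ≥0∞) * (1 + 1) ≤ K * ((volume Q.set)⁻¹ + 1) := by
      refine le_trans ?_ hV
      rw [one_add_one_eq_two, mul_comm]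
      exact_mod_cast hVK
    have hK0 : (K : ℝ≥0∞) ≠ 0 := by simpa using (one_pos.trans_le hK).ne'
    exact (ENNReal.add_le_add_iff_right ENNReal.one_ne_top).1
      ((ENNReal.mul_le_mul_iff_right hK0 ENNReal.coe_ne_top).1 hKV)
  have hVW : (V : ℝ≥0∞) ≤ (2 * K : ℝ≥0) * (volume Q.set)⁻¹ :=
    calc (V : ℝ≥0∞) ≤ K * ((volume Q.set)⁻¹ + (volume Q.set)⁻¹) := hV.trans (by gcongr)
      _ = (2 * K : ℝ≥0) * (volume Q.set)⁻¹ := by push_cast; ring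
  exact (hzreg.almostInc.leftInv_le_of_dyadic hzreg.toIsPhi hxreg.toIsPhi hp hL hγ
    (hxz (ENNReal.one_le_inv.1 one_le_inv)) (one_le_mul one_le_two hK) hVK hVW).trans le_add_self

theorem exists_invComparable (hφ : IsWeakPhi univ φ) {p : ℝ} (hp : 0 < p) (hinc : AInc p univ φ)
    (h0 : A0 univ φ) (h1 : A1 φ) (h2 : A2 φ) :
    ∃ h : RSp n → ℝ≥0, Measurable h ∧ (∀ x, 0 < h x) ∧ (∃ M : ℝ≥0, ∀ x, h x ≤ M) ∧
      ∫⁻ x, (h x : ℝ≥0∞) ≠ ∞ ∧ InvComparable φ h := by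
  obtain ⟨h, hmeas, hpos, hbdd, hint, Φi, β, s, hΦi, hβ, hs, hshift⟩ :=
    h2.exists_measurable_shiftLe hφ
  obtain ⟨L, hL, hinc⟩ := hinc
  obtain ⟨b, hb, -, h0⟩ := h0
  rw [Measure.restrict_univ] at h0
  refine ⟨h, hmeas, hpos, hbdd, hint,
    invComparable_of_isRegularPhi hφ h1 hΦi hp hL hb hβ hs ?_⟩
  filter_upwards [h0, hshift] with x hx hx'
  rw [phiInv, ← ENNReal.coe_one, ← (hφ.isPhi x).coe_leftInv, ← ENNReal.coe_inv hb.ne',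
    ENNReal.coe_le_coe, ENNReal.coe_le_coe] at hx
  exact { hφ.isPhi x with
    almostInc := hinc x (mem_univ x)
    le_leftInv_one := hx.1
    leftInv_one_le := hx.2
    shiftLe_infty := hx'.1
    infty_shiftLe := hx'.2 }

end Regularity

section CountableCubes

variable {n : ℕ} {α : ℝ}

theorem Cube.exists_countable_cover (n : ℕ) :
    ∃ 𝓓 : Set (Cube n), 𝓓.Countable ∧
      ∀ Q : Cube n, ∃ Q' ∈ 𝓓, Q.set ⊆ Q'.set ∧ volume Q'.set ≤ 2 ^ n * volume Q.set := by
  let rationalCube (i : ℕ × {q : ℚ // 0 < q}) : Cube n :=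
    ⟨TopologicalSpace.denseSeq (RSp n) i.1, (i.2 : ℚ), by exact_mod_cast i.2.2⟩
  refine ⟨range rationalCube, countable_range _, fun Q => ?_⟩
  have hr := Q.r_pos
  obtain ⟨i, hi⟩ :=
    (TopologicalSpace.denseRange_denseSeq (RSp n)).exists_dist_lt Q.c (half_pos hr)
  obtain ⟨q, hq, hq'⟩ := exists_rat_btwn (show 3 / 2 * Q.r < 2 * Q.r by linarith)
  have hq0 : 0 < q := by exact_mod_cast (by linarith : (0 : ℝ) < q)
  refine ⟨_, mem_range_self (i, ⟨q, hq0⟩), fun y hy j => ?_, ?_⟩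
  · have hcenter : |Q.c j - TopologicalSpace.denseSeq (RSp n) i j| ≤ Q.r / 2 :=
      (PiLp.norm_apply_le (Q.c - TopologicalSpace.denseSeq (RSp n) i) j).trans
        (dist_eq_norm Q.c _ ▸ hi.le)
    calc |y j - TopologicalSpace.denseSeq (RSp n) i j|
        ≤ |y j - Q.c j| + |Q.c j - TopologicalSpace.denseSeq (RSp n) i j| := abs_sub_le _ _ _
      _ ≤ q := by linarith [hy j]
  · rw [Cube.volume_set, Cube.volume_set, ← mul_pow, ← ENNReal.ofReal_ofNat,
      ← ENNReal.ofReal_mul two_pos.le]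
    gcongr

theorem fracMaximal_le_of_cover {𝓓 : Set (Cube n)} {A : ℝ≥0}
    (hcover : ∀ Q : Cube n, ∃ Q' ∈ 𝓓, Q.set ⊆ Q'.set ∧ volume Q'.set ≤ A * volume Q.set)
    (hα : α / n ≤ 1) {f : RSp n → ℝ} {x : RSp n} {B : ℝ≥0∞}
    (hB : ∀ Q ∈ 𝓓, x ∈ Q.set →
      volume Q.set ^ (α / n - 1) * ∫⁻ y in Q.set, (‖f y‖₊ : ℝ≥0∞) ≤ B) :
    fracMaximal α f x ≤ (A : ℝ≥0∞) ^ (1 - α / n) * B := by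
  refine iSup₂_le fun Q hx => ?_
  obtain ⟨Q', hQ', hsub, hvol⟩ := hcover Q
  have hA : (A : ℝ≥0∞) ≠ 0 := by
    rintro hA
    rw [hA, zero_mul, nonpos_iff_eq_zero] at hvol
    exact Q'.volume_set_ne_zero hvol
  have rpow_volume_le : volume Q.set ^ (α / n - 1) ≤
      (A : ℝ≥0∞) ^ (1 - α / n) * volume Q'.set ^ (α / n - 1) :=
    calc volume Q.set ^ (α / n - 1)
        = (A : ℝ≥0∞) ^ (1 - α / n) * (A * volume Q.set) ^ (α / n - 1) := by
          rw [ENNReal.mul_rpow_of_ne_top ENNReal.coe_ne_top Q.volume_set_ne_top, ← mul_assoc,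
            ← ENNReal.rpow_add _ _ hA ENNReal.coe_ne_top, sub_add_sub_cancel, sub_self,
            ENNReal.rpow_zero, one_mul]
      _ ≤ (A : ℝ≥0∞) ^ (1 - α / n) * volume Q'.set ^ (α / n - 1) := by
          gcongr (A : ℝ≥0∞) ^ (1 - α / n) * ?_
          rw [← neg_sub 1, ENNReal.rpow_neg, ENNReal.rpow_neg, ENNReal.inv_le_inv]
          exact ENNReal.rpow_le_rpow hvol (sub_nonneg.2 hα)
  calc volume Q.set ^ (α / n - 1) * ∫⁻ y in Q.set, (‖f y‖₊ : ℝ≥0∞)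
      ≤ (A : ℝ≥0∞) ^ (1 - α / n) * volume Q'.set ^ (α / n - 1) *
          ∫⁻ y in Q'.set, (‖f y‖₊ : ℝ≥0∞) := by
        gcongr
    _ ≤ (A : ℝ≥0∞) ^ (1 - α / n) * B := by
        rw [mul_assoc]
        gcongr
        exact hB Q' hQ' (hsub hx)

end CountableCubes

section FractionalInverse

/-- The relation `FracInvRel` at a single point, with exponent `a` and explicit constants. -/
def FracInv (a : ℝ) (c₁ c₂ : ℝ≥0) (Φ Ψ : ℝ≥0 → ℝ≥0∞) : Prop :=
  ∀ t : ℝ≥0, 0 < t → c₁ * (t ^ a * leftInv Ψ t) ≤ leftInv Φ t ∧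
    leftInv Φ t ≤ c₂ * (t ^ a * leftInv Ψ t)

theorem FracInvRel.exists_leftInv {n : ℕ} {α : ℝ} {φ ψ : RSp n → ℝ≥0 → ℝ≥0∞}
    (hφ : IsWeakPhi univ φ) (hψ : IsWeakPhi univ ψ) (h : FracInvRel α φ ψ) :
    ∃ c₁ c₂ : ℝ≥0, 0 < c₁ ∧ ∀ x, FracInv (α / n) c₁ c₂ (φ x) (ψ x) := by
  obtain ⟨c₁, c₂, hc₁, h⟩ := h
  refine ⟨c₁, c₂, hc₁, fun x t ht => ?_⟩
  have hxt := h x t ht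
  simp only [phiInv, ← (hφ.isPhi x).coe_leftInv, ← (hψ.isPhi x).coe_leftInv,
    ← ENNReal.coe_rpow_of_ne_zero ht.ne'] at hxt
  exact_mod_cast hxt

variable {Φ Ψ : ℝ≥0 → ℝ≥0∞} {p a : ℝ} {L c₁ c₂ u τ A B V w : ℝ≥0}

theorem AlmostInc.le_mul_leftInv (hinc : AlmostInc p L Φ) (hΦ : IsPhi Φ) (hp : 0 < p) (hL : 1 ≤ L)
    (hτ : Φ τ ≤ u) (hA : 0 < A) :
    τ ≤ (L * 2) ^ (1 / p) * ((A + u) / A) ^ (1 / p) * leftInv Φ A := by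
  have hlt : u < 2 * (A + u) := by
    rw [two_mul]
    exact (lt_add_of_pos_left u hA).trans (lt_add_of_pos_left _ (by positivity))
  have one_le : 1 ≤ 2 * ((A + u) / A) :=
    one_le_mul one_le_two ((one_le_div₀ hA).2 le_self_add)
  calc τ ≤ leftInv Φ (2 * (A + u)) := hΦ.le_leftInv (hτ.trans_lt (ENNReal.coe_lt_coe.2 hlt))
    _ = leftInv Φ (2 * ((A + u) / A) * A) := by rw [mul_assoc, div_mul_cancel₀ _ hA.ne']
    _ ≤ (L * (2 * ((A + u) / A))) ^ (1 / p) * leftInv Φ A := hinc.leftInv_mul_le hΦ hp hL one_le A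
    _ = _ := by rw [← mul_assoc, NNReal.mul_rpow]

theorem FracInv.leftInv_le (h : FracInv a c₁ c₂ Φ Ψ) (hΨ : IsPhi Ψ) (hc₁ : 0 < c₁) (hA : 0 < A)
    (hAV : A ≤ V) : leftInv Φ A ≤ c₂ * c₁⁻¹ * (A / V) ^ a * leftInv Φ V := by
  have hV : 0 < V := hA.trans_le hAV
  have hVa : V ^ a ≠ 0 := (NNReal.rpow_pos hV).ne'
  calc leftInv Φ A ≤ c₂ * (A ^ a * leftInv Ψ A) := (h A hA).2
    _ ≤ c₂ * (A ^ a * leftInv Ψ V) := by gcongr; exact hΨ.leftInv_mono hAV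
    _ = c₂ * c₁⁻¹ * (A / V) ^ a * (c₁ * (V ^ a * leftInv Ψ V)) := by
      rw [NNReal.div_rpow]
      field_simp
    _ ≤ _ := by gcongr; exact (h V hV).1

theorem FracInv.leftInv_le_mul_rpow (h : FracInv a c₁ c₂ Φ Ψ) (hinc : AlmostInc p L Φ)
    (hΦ : IsPhi Φ) (hp : 0 < p) (hL : 1 ≤ L) (hB : 0 < B) (hBV : B ≤ V) :
    leftInv Φ V ≤ L ^ (1 / p) * c₂ * ((V / B) ^ (1 / p) * B ^ a) * leftInv Ψ B :=
  calc leftInv Φ V = leftInv Φ (V / B * B) := by rw [div_mul_cancel₀ _ hB.ne']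
    _ ≤ (L * (V / B)) ^ (1 / p) * leftInv Φ B :=
      hinc.leftInv_mul_le hΦ hp hL ((one_le_div₀ hB).2 hBV) B
    _ ≤ (L * (V / B)) ^ (1 / p) * (c₂ * (B ^ a * leftInv Ψ B)) := by gcongr; exact (h B hB).2
    _ = _ := by rw [NNReal.mul_rpow]; ring

theorem rpow_div_mul_rpow_div_le {θ : ℝ} (haθ : a ≤ θ) (hw : 0 < w) (hA : 0 < A) (hB : 0 < B)
    (hV : 0 < V) (h : V * w ≤ A * B) (U : ℝ≥0) :
    (U / A) ^ θ * (A / V) ^ a * ((V / B) ^ θ * B ^ a) ≤ (U / w) ^ θ * w ^ a := by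
  have rpow_split {y : ℝ≥0} (hy : 0 < y) : y ^ θ = y ^ a * y ^ (θ - a) := by
    rw [← NNReal.rpow_add hy.ne', add_sub_cancel]
  have ratio_le : V / (A * B) ≤ 1 / w := by
    rwa [div_le_div_iff₀ (by positivity) hw, one_mul]
  calc (U / A) ^ θ * (A / V) ^ a * ((V / B) ^ θ * B ^ a)
      = U ^ θ * (V / (A * B)) ^ (θ - a) := by
        simp only [NNReal.div_rpow, NNReal.mul_rpow, rpow_split hA, rpow_split hB, rpow_split hV]
        field_simp
    _ ≤ U ^ θ * (1 / w) ^ (θ - a) := by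
        grw [NNReal.rpow_le_rpow ratio_le (sub_nonneg.2 haθ)]
    _ = (U / w) ^ θ * w ^ a := by
        simp only [NNReal.div_rpow, rpow_split hw, NNReal.one_rpow]
        field_simp

theorem AlmostInc.le_mul_leftInv_of_fracInv {Φ' Ψ' : ℝ≥0 → ℝ≥0∞} {C k k' : ℝ≥0}
    (hinc : AlmostInc p L Φ) (hinc' : AlmostInc p L Φ') (hΦ : IsPhi Φ) (hΨ : IsPhi Ψ)
    (hΦ' : IsPhi Φ') (hp : 1 ≤ p) (hL : 1 ≤ L) (hfrac : FracInv a c₁ c₂ Φ Ψ)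
    (hfrac' : FracInv a c₁ c₂ Φ' Ψ') (hc₁ : 0 < c₁) (hap : a ≤ 1 / p) (hw : 0 < w) (hτ : Φ τ ≤ u)
    (hcomp : leftInv Φ (w + k + k') ≤ C * leftInv Φ' (w + k + k')) :
    τ ≤ (L * 2) ^ (1 / p) * (c₂ * c₁⁻¹) * C * (L ^ (1 / p) * c₂) * leftInv Ψ' (w + k') *
      (w ^ a * (1 + (u + k) ^ (1 / p) / w ^ (1 / p))) := by
  have hp0 : 0 < p := one_pos.trans_le hp
  have hA : 0 < w + k := by positivity
  have hB : 0 < w + k' := by positivity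
  have hV : 0 < w + k + k' := by positivity
  have hBV : w + k' ≤ w + k + k' := by gcongr; exact le_self_add
  have hVw : (w + k + k') * w ≤ (w + k) * (w + k') :=
    calc (w + k + k') * w ≤ (w + k + k') * w + k * k' := le_self_add
      _ = (w + k) * (w + k') := by ring
  have root_le : ((w + k + u) / w) ^ (1 / p) ≤ 1 + (u + k) ^ (1 / p) / w ^ (1 / p) :=
    calc ((w + k + u) / w) ^ (1 / p) = (1 + (u + k) / w) ^ (1 / p) := by
          congr 1; field_simp; ring
      _ ≤ 1 + (u + k) ^ (1 / p) / w ^ (1 / p) := by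
          rw [← NNReal.div_rpow]
          simpa only [NNReal.one_rpow] using NNReal.rpow_add_le_add_rpow 1 ((u + k) / w)
            (by positivity) ((div_le_one hp0).2 hp)
  calc τ ≤ (L * 2) ^ (1 / p) * ((w + k + u) / (w + k)) ^ (1 / p) * leftInv Φ (w + k) :=
        hinc.le_mul_leftInv hΦ hp0 hL hτ hA
    _ ≤ (L * 2) ^ (1 / p) * ((w + k + u) / (w + k)) ^ (1 / p) *
          (c₂ * c₁⁻¹ * ((w + k) / (w + k + k')) ^ a * (C * (L ^ (1 / p) * c₂ *
            (((w + k + k') / (w + k')) ^ (1 / p) * (w + k') ^ a) * leftInv Ψ' (w + k')))) := by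
        grw [hfrac.leftInv_le hΨ hc₁ hA le_self_add, hcomp,
          hfrac'.leftInv_le_mul_rpow hinc' hΦ' hp0 hL hB hBV]
    _ = (L * 2) ^ (1 / p) * (c₂ * c₁⁻¹) * C * (L ^ (1 / p) * c₂) * leftInv Ψ' (w + k') *
          (((w + k + u) / (w + k)) ^ (1 / p) * ((w + k) / (w + k + k')) ^ a *
            (((w + k + k') / (w + k')) ^ (1 / p) * (w + k') ^ a)) := by ring
    _ ≤ _ := by
        grw [rpow_div_mul_rpow_div_le hap hw hA hB hV hVw, root_le, mul_comm (w ^ a)]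

end FractionalInverse

section Averages

theorem lintegral_rpow_one_div_le {X : Type*} [MeasurableSpace X] {μ : Measure X}
    [IsProbabilityMeasure μ] {F : X → ℝ≥0∞} (hF : AEMeasurable F μ) {p : ℝ} (hp : 1 ≤ p) :
    ∫⁻ x, F x ^ (1 / p) ∂μ ≤ (∫⁻ x, F x ∂μ) ^ (1 / p) := by
  have hp0 : p ≠ 0 := (one_pos.trans_le hp).ne'
  have h := eLpNorm'_le_eLpNorm'_of_exponent_le one_pos hp μ
    (hF.pow_const (1 / p)).aestronglyMeasurable
  simpa only [eLpNorm', enorm_eq_self, ← ENNReal.rpow_mul, one_div_mul_cancel hp0,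
    ENNReal.rpow_one, div_one] using h

variable {n : ℕ} {Q : Cube n} {p : ℝ} {F : RSp n → ℝ≥0} {K w : ℝ≥0}

/-- `w` is the power mean of `F` over the cube `Q` with exponent `1/p`. -/
def IsRootMean (p : ℝ) (Q : Cube n) (F : RSp n → ℝ≥0) (w : ℝ≥0) : Prop :=
  (w : ℝ≥0∞) ^ (1 / p) = (volume Q.set)⁻¹ * ∫⁻ y in Q.set, (F y : ℝ≥0∞) ^ (1 / p)

theorem exists_isRootMean (hp : 1 ≤ p) (hF : AEMeasurable F volume) (hpos : ∀ y, 0 < F y)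
    (hK : ∫⁻ y in Q.set, (F y : ℝ≥0∞) ≤ K) :
    ∃ w : ℝ≥0, 0 < w ∧ (w : ℝ≥0∞) * volume Q.set ≤ K ∧ IsRootMean p Q F w := by
  have hp0 : 0 < p := one_pos.trans_le hp
  have hv0 := Q.volume_set_ne_zero
  have hv := Q.volume_set_ne_top
  have hFQ : AEMeasurable (fun y => (F y : ℝ≥0∞)) (volume.restrict Q.set) :=
    hF.coe_nnreal_ennreal.restrict
  set m := (volume Q.set)⁻¹ * ∫⁻ y in Q.set, (F y : ℝ≥0∞) ^ (1 / p)
  have hm0 : m ≠ 0 := by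
    refine mul_ne_zero (ENNReal.inv_ne_zero.2 hv) fun h => ?_
    have h_ae := (lintegral_eq_zero_iff' (hFQ.pow_const _)).1 h
    have : NeZero (volume.restrict Q.set) := ⟨by rwa [Ne, Measure.restrict_eq_zero]⟩
    obtain ⟨y, hy⟩ := h_ae.exists
    exact (ENNReal.rpow_pos (ENNReal.coe_pos.2 (hpos y)) ENNReal.coe_ne_top).ne' hy
  have power_mean_le : m ^ p ≤ (volume Q.set)⁻¹ * K := by
    have : IsProbabilityMeasure ((volume Q.set)⁻¹ • volume.restrict Q.set) :=
      ⟨by simp [ENNReal.inv_mul_cancel hv0 hv]⟩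
    have h := lintegral_rpow_one_div_le (hFQ.smul_measure (volume Q.set)⁻¹) hp
    rw [lintegral_smul_measure, lintegral_smul_measure, smul_eq_mul, smul_eq_mul] at h
    calc m ^ p ≤ (volume Q.set)⁻¹ * ∫⁻ y in Q.set, (F y : ℝ≥0∞) :=
          (ENNReal.le_rpow_inv_iff hp0).1 (h.trans_eq (by rw [one_div]))
      _ ≤ (volume Q.set)⁻¹ * K := by gcongr
  have hmp : m ^ p ≠ ∞ := ne_top_of_le_ne_top (by finiteness) power_mean_le
  refine ⟨(m ^ p).toNNReal, ?_, ?_, ?_⟩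
  · exact ENNReal.toNNReal_pos (by simp [ENNReal.rpow_eq_zero_iff, hm0, hp0.le]) hmp
  · rw [ENNReal.coe_toNNReal hmp]
    calc m ^ p * volume Q.set ≤ (volume Q.set)⁻¹ * K * volume Q.set := by gcongr
      _ = K := by rw [mul_right_comm, ENNReal.inv_mul_cancel hv0 hv, one_mul]
  · rw [IsRootMean, ENNReal.coe_toNNReal hmp, ← ENNReal.rpow_mul, mul_one_div_cancel hp0.ne',
      ENNReal.rpow_one]

theorem IsRootMean.rpow_volume_mul_lintegral_le (hmean : IsRootMean p Q F w)
    (hp : 0 < p) (hF : AEMeasurable F volume) (hw : 0 < w) (hK : (w : ℝ≥0∞) * volume Q.set ≤ K)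
    {a : ℝ} (ha : 0 ≤ a) {f : RSp n → ℝ≥0} {D : ℝ≥0}
    (hf : ∀ᵐ y ∂volume.restrict Q.set, f y ≤ D * (w ^ a * (1 + F y ^ (1 / p) / w ^ (1 / p)))) :
    volume Q.set ^ (a - 1) * ∫⁻ y in Q.set, (f y : ℝ≥0∞) ≤ ((2 * K ^ a * D : ℝ≥0) : ℝ≥0∞) := by
  have hv0 := Q.volume_set_ne_zero
  have hv := Q.volume_set_ne_top
  have hFQ : AEMeasurable (fun y => (F y : ℝ≥0∞) ^ (1 / p)) (volume.restrict Q.set) :=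
    hF.coe_nnreal_ennreal.restrict.pow_const _
  have hm0 : (w : ℝ≥0∞) ^ (1 / p) ≠ 0 := by simp [ENNReal.rpow_eq_zero_iff, hw.ne']
  have hm : (w : ℝ≥0∞) ^ (1 / p) ≠ ∞ := by finiteness
  have lintegral_ratio :
      ∫⁻ y in Q.set, (1 + (F y : ℝ≥0∞) ^ (1 / p) / (w : ℝ≥0∞) ^ (1 / p)) = 2 * volume Q.set := by
    have hmv : ∫⁻ y in Q.set, (F y : ℝ≥0∞) ^ (1 / p) = volume Q.set * (w : ℝ≥0∞) ^ (1 / p) := by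
      rw [hmean, ← mul_assoc, ENNReal.mul_inv_cancel hv0 hv, one_mul]
    rw [lintegral_add_left measurable_const]
    simp_rw [ENNReal.div_eq_inv_mul]
    rw [lintegral_const_mul'' _ hFQ, hmv, mul_left_comm, mul_comm (_⁻¹),
      ENNReal.mul_inv_cancel hm0 hm, setLIntegral_const, one_mul, mul_one, two_mul]
  have lintegral_le : ∫⁻ y in Q.set, (f y : ℝ≥0∞) ≤
      D * ((w : ℝ≥0∞) ^ a * (2 * volume Q.set)) := by
    rw [← lintegral_ratio, ← lintegral_const_mul' _ _ (by finiteness),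
      ← lintegral_const_mul' _ _ (by finiteness)]
    refine lintegral_mono_ae (hf.mono fun y hy => ?_)
    rw [← ENNReal.coe_rpow_of_ne_zero hw.ne', ← ENNReal.coe_rpow_of_ne_zero hw.ne',
      ← ENNReal.coe_rpow_of_nonneg _ (by positivity),
      ← ENNReal.coe_div (NNReal.rpow_pos hw).ne']
    exact_mod_cast hy
  calc volume Q.set ^ (a - 1) * ∫⁻ y in Q.set, (f y : ℝ≥0∞)
      ≤ volume Q.set ^ (a - 1) * (D * ((w : ℝ≥0∞) ^ a * (2 * volume Q.set ^ (1 : ℝ)))) := by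
        rw [ENNReal.rpow_one]
        gcongr
    _ = 2 * ((w : ℝ≥0∞) ^ a * (volume Q.set ^ (a - 1) * volume Q.set ^ (1 : ℝ))) * D := by ring
    _ = 2 * ((w : ℝ≥0∞) * volume Q.set) ^ a * D := by
        rw [← ENNReal.rpow_add _ _ hv0 hv, sub_add_cancel, ENNReal.mul_rpow_of_nonneg _ _ ha]
    _ ≤ 2 * (K : ℝ≥0∞) ^ a * D := by gcongr
    _ = _ := by rw [← ENNReal.coe_rpow_of_nonneg _ ha]; push_cast; rfl

end Averages

section ModularEstimate

variable {n : ℕ} {φ ψ : RSp n → ℝ≥0 → ℝ≥0∞} {h : RSp n → ℝ≥0} {p a : ℝ} {L c₁ c₂ M K : ℝ≥0}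
  {f : RSp n → ℝ}

/-- The density of the modular of `f`, shifted by the error function `h` of the regularity
conditions so that it is bounded below by `h`. The value is meaningless where `φ(x, |f(x)|) = ∞`. -/
noncomputable def shiftedModular (φ : RSp n → ℝ≥0 → ℝ≥0∞) (h : RSp n → ℝ≥0) (f : RSp n → ℝ)
    (x : RSp n) : ℝ≥0 :=
  (φ x ‖f x‖₊).toNNReal + h x

theorem aemeasurable_shiftedModular (hφ : IsWeakPhi univ φ) (hh : Measurable h)
    (hf : AEMeasurable f volume) : AEMeasurable (shiftedModular φ h f) volume :=
  (hφ.aemeasurable hf.nnnorm).ennreal_toNNReal.add hh.aemeasurable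

theorem lintegral_shiftedModular_le (hh : Measurable h) :
    ∫⁻ x, (shiftedModular φ h f x : ℝ≥0∞) ≤ (∫⁻ x, φ x ‖f x‖₊) + ∫⁻ x, (h x : ℝ≥0∞) := by
  simp only [shiftedModular, ENNReal.coe_add]
  rw [lintegral_add_right _ hh.coe_nnreal_ennreal]
  exact add_le_add (lintegral_mono fun _ => ENNReal.coe_toNNReal_le_self) le_rfl

theorem coe_add_le_mul_inv_add_one {v : ℝ≥0∞} (hv0 : v ≠ 0) (hv : v ≠ ∞) {w k : ℝ≥0}
    (hw : (w : ℝ≥0∞) * v ≤ K) (hk : k ≤ M) :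
    ((w + k : ℝ≥0) : ℝ≥0∞) ≤ (1 + K + M : ℝ≥0) * (v⁻¹ + 1) := by
  have hwv : (w : ℝ≥0∞) ≤ K * v⁻¹ := by
    rw [← div_eq_mul_inv]
    exact (ENNReal.le_div_iff_mul_le (.inl hv0) (.inl hv)).2 hw
  calc ((w + k : ℝ≥0) : ℝ≥0∞) ≤ K * v⁻¹ + M * 1 := by
        rw [mul_one, ENNReal.coe_add]
        gcongr
    _ ≤ (1 + K + M : ℝ≥0) * v⁻¹ + (1 + K + M : ℝ≥0) * 1 := by
        gcongr
        · rw [add_right_comm]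
          exact le_add_self
        · exact le_add_self
    _ = _ := by rw [mul_add]

theorem InvComparable.exists_average_le (hcomp : InvComparable φ h) (hφ : IsWeakPhi univ φ)
    (hψ : ∀ x, IsPhi (ψ x)) (hinc : ∀ x, AlmostInc p L (φ x)) (hL : 1 ≤ L) (hp : 1 ≤ p)
    (ha : 0 ≤ a) (hap : a ≤ 1 / p) (hfrac : ∀ x, FracInv a c₁ c₂ (φ x) (ψ x)) (hc₁ : 0 < c₁)
    (hh : Measurable h) (hpos : ∀ x, 0 < h x) (hM : ∀ x, h x ≤ M) (K : ℝ≥0) :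
    ∃ D : ℝ≥0, ∀ f, AEMeasurable f volume → (∀ᵐ x, φ x ‖f x‖₊ ≠ ∞) →
      ∫⁻ x, (shiftedModular φ h f x : ℝ≥0∞) ≤ K → ∀ Q : Cube n, ∃ w : ℝ≥0,
        IsRootMean p Q (shiftedModular φ h f) w ∧ ∀ᵐ x ∂volume.restrict Q.set,
          volume Q.set ^ (a - 1) * ∫⁻ y in Q.set, (‖f y‖₊ : ℝ≥0∞) ≤
            ((D * leftInv (ψ x) (w + h x) : ℝ≥0) : ℝ≥0∞) := by
  obtain ⟨C, hC⟩ := hcomp (1 + K + (M + M)) (by rw [add_assoc]; exact le_self_add)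
  refine ⟨2 * K ^ a * ((L * 2) ^ (1 / p) * (c₂ * c₁⁻¹) * C * (L ^ (1 / p) * c₂)),
    fun f hf hfin hK Q => ?_⟩
  have hF := aemeasurable_shiftedModular hφ hh hf
  obtain ⟨w, hw, hwK, hmean⟩ := exists_isRootMean hp hF (fun y => by
    exact (hpos y).trans_le le_add_self) ((setLIntegral_le_lintegral Q.set _).trans hK)
  refine ⟨w, hmean, (hC Q).mono fun x hx => ?_⟩
  rw [mul_assoc]
  refine hmean.rpow_volume_mul_lintegral_le (one_pos.trans_le hp) hF hw hwK ha ?_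
  filter_upwards [hx, ae_restrict_of_ae hfin] with z hz hfz
  exact (hinc z).le_mul_leftInv_of_fracInv (hinc x) (hφ.isPhi z) (hψ z) (hφ.isPhi x) hp hL
    (hfrac z) (hfrac x) hc₁ hap hw (ENNReal.coe_toNNReal hfz).ge
    (hz _ le_add_self (by rw [add_right_comm]; exact le_add_self) (by
      rw [add_assoc]
      exact coe_add_le_mul_inv_add_one Q.volume_set_ne_zero Q.volume_set_ne_top hwK
        (add_le_add (hM z) (hM x))))

/-- The maximal operator of power means with exponent `1/p`, in the form `(M(F ^ (1/p))) ^ p`; it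
dominates the root means of `F` and is bounded on `L¹`. -/
noncomputable def rootMaximal (p : ℝ) (F : RSp n → ℝ≥0) (x : RSp n) : ℝ≥0∞ :=
  maximal (fun y => ((F y ^ (1 / p) : ℝ≥0) : ℝ)) x ^ p

theorem measurable_rootMaximal (p : ℝ) (F : RSp n → ℝ≥0) : Measurable (rootMaximal p F) :=
  (lowerSemicontinuous_maximal _).measurable.pow_const p

theorem IsRootMean.le_rootMaximal {F : RSp n → ℝ≥0} {Q : Cube n} {w : ℝ≥0}
    (hmean : IsRootMean p Q F w) (hp : 0 < p) {x : RSp n} (hx : x ∈ Q.set) :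
    (w : ℝ≥0∞) ≤ rootMaximal p F x := by
  rw [rootMaximal, ← ENNReal.rpow_inv_le_iff hp, ← one_div, hmean]
  refine le_of_eq_of_le ?_ (laverage_le_maximal _ hx)
  congr 1
  refine lintegral_congr fun y => ?_
  rw [NNReal.nnnorm_eq, ENNReal.coe_rpow_of_nonneg _ (by positivity)]

theorem exists_lintegral_rootMaximal_le (hn : 0 < n) (hp : 1 < p) :
    ∃ N : ℝ≥0, ∀ F : RSp n → ℝ≥0, AEMeasurable F volume →
      ∫⁻ x, rootMaximal p F x ≤ N * ∫⁻ x, (F x : ℝ≥0∞) := by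
  have hp0 : 0 < p := one_pos.trans hp
  obtain ⟨N, hN⟩ := exists_lintegral_maximal_rpow_le hn hp
  refine ⟨N, fun F hF => (hN _ (hF.pow_const _).coe_nnreal_real).trans_eq ?_⟩
  congr 1
  refine lintegral_congr fun x => ?_
  rw [NNReal.nnnorm_eq, ← ENNReal.coe_rpow_of_nonneg _ hp0.le, ← NNReal.rpow_mul,
    one_div_mul_cancel hp0.ne', NNReal.rpow_one]

theorem ae_fracMaximal_le_of_average_le {α : ℝ} (hψ : ∀ x, IsPhi (ψ x)) (hp : 0 < p)
    (hα : α / n ≤ 1) {F : RSp n → ℝ≥0} (hF : ∀ᵐ x, rootMaximal p F x < ∞) {D : ℝ≥0}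
    (havg : ∀ Q : Cube n, ∃ w : ℝ≥0, IsRootMean p Q F w ∧ ∀ᵐ x ∂volume.restrict Q.set,
      volume Q.set ^ (α / n - 1) * ∫⁻ y in Q.set, (‖f y‖₊ : ℝ≥0∞) ≤
        ((D * leftInv (ψ x) (w + h x) : ℝ≥0) : ℝ≥0∞)) :
    ∀ᵐ x, fracMaximal α f x ≤ (((2 ^ n) ^ (1 - α / n) * D *
      leftInv (ψ x) ((rootMaximal p F x).toNNReal + h x) : ℝ≥0) : ℝ≥0∞) := by
  obtain ⟨𝓓, h𝓓, hcover⟩ := Cube.exists_countable_cover n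
  have havg' : ∀ᵐ x, ∀ Q ∈ 𝓓, x ∈ Q.set → ∃ w : ℝ≥0, IsRootMean p Q F w ∧
      volume Q.set ^ (α / n - 1) * ∫⁻ y in Q.set, (‖f y‖₊ : ℝ≥0∞) ≤
        ((D * leftInv (ψ x) (w + h x) : ℝ≥0) : ℝ≥0∞) := by
    refine (ae_ball_iff h𝓓).2 fun Q _ => ?_
    obtain ⟨w, hw, hle⟩ := havg Q
    exact ((ae_restrict_iff' Q.measurableSet_set).1 hle).mono fun x hx hxQ => ⟨w, hw, hx hxQ⟩
  filter_upwards [havg', hF] with x hx hFx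
  have hle := fracMaximal_le_of_cover (A := 2 ^ n) (f := f) (x := x) hcover hα fun Q hQ hxQ => by
    obtain ⟨w, hw, hle⟩ := hx Q hQ hxQ
    have hwM : w ≤ (rootMaximal p F x).toNNReal := by
      rw [← ENNReal.coe_le_coe, ENNReal.coe_toNNReal hFx.ne]
      exact hw.le_rootMaximal hp hxQ
    exact hle.trans (ENNReal.coe_le_coe.2 (mul_le_mul_right
      ((hψ x).leftInv_mono (add_le_add hwM le_rfl)) D))
  rwa [← ENNReal.coe_rpow_of_nonneg _ (sub_nonneg.2 hα), ← ENNReal.coe_mul, ← mul_assoc] at hle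

theorem InvComparable.exists_fracMaximal_le {α : ℝ} (hn : 0 < n) (hcomp : InvComparable φ h)
    (hφ : IsWeakPhi univ φ) (hψ : ∀ x, IsPhi (ψ x)) (hinc : ∀ x, AlmostInc p L (φ x)) (hL : 1 ≤ L)
    (hp : 1 < p) (hα : 0 ≤ α / n) (hαp : α / n ≤ 1 / p)
    (hfrac : ∀ x, FracInv (α / n) c₁ c₂ (φ x) (ψ x)) (hc₁ : 0 < c₁)
    (hh : Measurable h) (hpos : ∀ x, 0 < h x) (hM : ∀ x, h x ≤ M)
    (hint : ∫⁻ x, (h x : ℝ≥0∞) ≠ ∞) :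
    ∃ D N : ℝ≥0, ∀ f, AEMeasurable f volume → ∫⁻ x, φ x ‖f x‖₊ ≤ 1 →
      ∃ G : RSp n → ℝ≥0, ∫⁻ x, (G x : ℝ≥0∞) ≤ N ∧
        ∀ᵐ x, fracMaximal α f x ≤ ((D * leftInv (ψ x) (G x) : ℝ≥0) : ℝ≥0∞) := by
  have hp0 : 0 < p := one_pos.trans hp
  obtain ⟨H, hH⟩ : ∃ H : ℝ≥0, (H : ℝ≥0∞) = ∫⁻ x, (h x : ℝ≥0∞) := ⟨_, ENNReal.coe_toNNReal hint⟩
  obtain ⟨D, hD⟩ := hcomp.exists_average_le hφ hψ hinc hL hp.le hα hαp hfrac hc₁ hh hpos hM (1 + H)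
  obtain ⟨N, hN⟩ := exists_lintegral_rootMaximal_le hn hp
  refine ⟨(2 ^ n) ^ (1 - α / n) * D, N * (1 + H) + H, fun f hf hmod => ?_⟩
  let F := shiftedModular φ h f
  have hmod_fin : ∀ᵐ x, φ x ‖f x‖₊ ≠ ∞ :=
    (ae_lt_top' (hφ.aemeasurable hf.nnnorm) (hmod.trans_lt ENNReal.one_lt_top).ne).mono
      fun _ hx => hx.ne
  have hF : ∫⁻ x, (F x : ℝ≥0∞) ≤ (1 + H : ℝ≥0) :=
    (lintegral_shiftedModular_le hh).trans (by rw [← hH, ENNReal.coe_add]; gcongr; exact hmod)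
  have hMF : ∫⁻ x, rootMaximal p F x ≤ (N * (1 + H) : ℝ≥0) :=
    (hN F (aemeasurable_shiftedModular hφ hh hf)).trans (by rw [ENNReal.coe_mul]; gcongr)
  have hMF_fin : ∀ᵐ x, rootMaximal p F x < ∞ :=
    ae_lt_top (measurable_rootMaximal p F) (hMF.trans_lt ENNReal.coe_lt_top).ne
  refine ⟨fun x => (rootMaximal p F x).toNNReal + h x, ?_,
    ae_fracMaximal_le_of_average_le hψ hp0 (hαp.trans ((div_le_one hp0).2 hp.le)) hMF_fin
      (hD f hf hmod_fin hF)⟩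
  simp only [ENNReal.coe_add]
  rw [lintegral_add_right _ hh.coe_nnreal_ennreal, ← hH]
  exact add_le_add ((lintegral_mono fun _ => ENNReal.coe_toNNReal_le_self).trans hMF) le_rfl

end ModularEstimate

section Norm

variable {n : ℕ} {Ω : Set (RSp n)} {φ ψ : RSp n → ℝ≥0 → ℝ≥0∞} {α : ℝ}

theorem phiE_div_le_of_le_leftInv {x : RSp n} (hφ : IsPhi (φ x))
    {L D R t : ℝ≥0} (hinc : AlmostInc 1 L (φ x)) (hL : 1 ≤ L) (hD : 0 < D) (hR : 1 ≤ R)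
    {T : ℝ≥0∞} (hT : T ≤ ((D * leftInv (φ x) t : ℝ≥0) : ℝ≥0∞)) :
    phiE φ x (T / (D * (2 * R) : ℝ≥0)) ≤ (L : ℝ≥0∞) / R * t := by
  have hR0 : 0 < R := one_pos.trans_le hR
  refine iSup₂_le fun s hs => ?_
  obtain rfl | hs0 := eq_zero_or_pos s
  · rw [hφ.zero]
    exact zero_le
  have two_mul_le : 2 * (s * R) ≤ leftInv (φ x) t := by
    refine le_of_mul_le_mul_left ?_ hD
    rw [ENNReal.le_div_iff_mul_le (.inl (by positivity)) (.inl ENNReal.coe_ne_top)] at hs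
    calc D * (2 * (s * R)) = s * (D * (2 * R)) := by ring
      _ ≤ D * leftInv (φ x) t := by exact_mod_cast hs.trans hT
  have hlt : s * R < leftInv (φ x) t :=
    (lt_two_mul_self (mul_pos hs0 hR0)).trans_le two_mul_le
  have mul_le : (R : ℝ≥0∞) * φ x s ≤ L * t :=
    calc (R : ℝ≥0∞) * φ x s ≤ L * φ x (R * s) := by
          simpa only [ENNReal.rpow_one] using hinc.rpow_mul_le zero_le_one hL hR hs0
      _ ≤ L * t := by
          gcongr
          exact mul_comm s R ▸ (lt_of_lt_leftInv hlt).le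
  rwa [← ENNReal.mul_div_right_comm, ENNReal.le_div_iff_mul_le (.inl (by positivity))
    (.inl ENNReal.coe_ne_top), mul_comm]

theorem orliczNormE_le_of_le_leftInv (hψ : ∀ x, IsPhi (ψ x)) {L : ℝ≥0}
    (hinc : ∀ x, AlmostInc 1 L (ψ x)) (hL : 1 ≤ L) {T : RSp n → ℝ≥0∞} {G : RSp n → ℝ≥0} {D N : ℝ≥0}
    (hD : 0 < D) (hN : 1 ≤ N) (hG : ∫⁻ x, (G x : ℝ≥0∞) ≤ N)
    (hT : ∀ᵐ x, T x ≤ ((D * leftInv (ψ x) (G x) : ℝ≥0) : ℝ≥0∞)) :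
    orliczNormE ψ univ T ≤ ((D * (2 * (L * N)) : ℝ≥0) : ℝ≥0∞) := by
  refine sInf_le ⟨_, ⟨by positivity, ?_⟩, rfl⟩
  rw [Measure.restrict_univ]
  calc ∫⁻ x, phiE ψ x (T x / (D * (2 * (L * N)) : ℝ≥0))
      ≤ ∫⁻ x, (L : ℝ≥0∞) / (L * N : ℝ≥0) * G x := lintegral_mono_ae (hT.mono fun x hx =>
        phiE_div_le_of_le_leftInv (hψ x) (hinc x) hL hD (one_le_mul hL hN) hx)
    _ ≤ (L : ℝ≥0∞) / (L * N : ℝ≥0) * N := by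
        rw [lintegral_const_mul' _ _ (by finiteness)]
        gcongr
    _ = 1 := by
        rw [← ENNReal.mul_div_right_comm, ← ENNReal.coe_mul]
        exact ENNReal.div_self (by positivity) ENNReal.coe_ne_top

theorem orliczNormE_const_mul_le {c : ℝ≥0} (hc : 0 < c) (g : RSp n → ℝ≥0∞) :
    orliczNormE ψ Ω (fun x => c * g x) ≤ c * orliczNormE ψ Ω g := by
  have hc0 : (c : ℝ≥0∞) ≠ 0 := by exact_mod_cast hc.ne'
  rw [mul_comm, ← ENNReal.div_le_iff hc0 ENNReal.coe_ne_top]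
  refine le_sInf ?_
  rintro _ ⟨lam, ⟨hlam, hmod⟩, rfl⟩
  rw [ENNReal.div_le_iff hc0 ENNReal.coe_ne_top]
  refine sInf_le ⟨lam * c, ⟨by positivity, ?_⟩, ENNReal.coe_mul _ _⟩
  simpa only [mul_comm lam, ENNReal.coe_mul, ENNReal.mul_div_mul_left _ _ hc0 ENNReal.coe_ne_top]
    using hmod

theorem fracMaximal_const_mul (c : ℝ) (f : RSp n → ℝ) (x : RSp n) :
    fracMaximal α (fun y => c * f y) x = ‖c‖₊ * fracMaximal α f x := by
  simp only [fracMaximal, nnnorm_mul, ENNReal.coe_mul, ENNReal.mul_iSup,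
    lintegral_const_mul' _ _ ENNReal.coe_ne_top, mul_left_comm]

theorem orliczNormE_fracMaximal_le_of_unit_modular {C : ℝ≥0} (hC : 0 < C)
    (hbound : ∀ f, AEMeasurable f volume → ∫⁻ x, φ x ‖f x‖₊ ≤ 1 →
      orliczNormE ψ univ (fracMaximal α f) ≤ C) {f : RSp n → ℝ} (hf : AEMeasurable f volume) :
    orliczNormE ψ univ (fracMaximal α f) ≤ C * orliczNorm φ univ f := by
  have hC0 : (C : ℝ≥0∞) ≠ 0 := by exact_mod_cast hC.ne'
  rw [mul_comm, ← ENNReal.div_le_iff hC0 ENNReal.coe_ne_top]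
  refine le_sInf ?_
  rintro _ ⟨lam, ⟨hlam, hmod⟩, rfl⟩
  rw [ENNReal.div_le_iff hC0 ENNReal.coe_ne_top]
  have hscale : fracMaximal α f = fun x => lam * fracMaximal α (fun y => (lam : ℝ)⁻¹ * f y) x := by
    have hlam' : (lam : ℝ) ≠ 0 := by exact_mod_cast hlam.ne'
    funext x
    rw [← NNReal.nnnorm_eq lam, ← fracMaximal_const_mul, NNReal.nnnorm_eq]
    simp only [mul_inv_cancel_left₀ hlam']
  rw [Measure.restrict_univ] at hmod
  rw [hscale]
  refine (orliczNormE_const_mul_le hlam _).trans (mul_le_mul_right (hbound _ (hf.const_mul _) ?_) _)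
  have nnnorm_scaled (y : RSp n) : ‖(lam : ℝ)⁻¹ * f y‖₊ = ‖f y‖₊ / lam := by
    rw [nnnorm_mul, nnnorm_inv, NNReal.nnnorm_eq, inv_mul_eq_div]
  simpa only [nnnorm_scaled] using hmod

end Norm

theorem statement6_general {n : ℕ} (hn : 0 < n) (p α : ℝ) (φ ψ : RSp n → ℝ≥0 → ℝ≥0∞)
    (hp : 1 < p) (hα : 0 ≤ α / (n : ℝ)) (hαp : α / (n : ℝ) ≤ 1 / p)
    (hφ : IsWeakPhi Set.univ φ) (hψ : IsWeakPhi Set.univ ψ) (hinv : FracInvRel α φ ψ)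
    (ha0 : A0 Set.univ φ) (ha1 : A1 φ) (ha2 : A2 φ) (hainc : AInc p Set.univ φ) :
    ∃ C : ℝ≥0, ∀ f : RSp n → ℝ, AEMeasurable f volume →
      orliczNormE ψ Set.univ (fracMaximal α f) ≤ (C : ℝ≥0∞) * orliczNorm φ Set.univ f := by
  obtain ⟨h, hh, hpos, ⟨M, hM⟩, hint, hcomp⟩ :=
    exists_invComparable hφ (one_pos.trans hp) hainc ha0 ha1 ha2
  obtain ⟨c₁, c₂, hc₁, hfrac⟩ := hinv.exists_leftInv hφ hψ
  obtain ⟨L, hL, hinc⟩ := hainc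
  obtain ⟨Lψ, hLψ, hincψ⟩ := hψ.almost_inc
  obtain ⟨D, N, hDN⟩ := hcomp.exists_fracMaximal_le hn hφ hψ.isPhi
    (fun x => hinc x (mem_univ x)) hL hp hα hαp hfrac hc₁ hh hpos hM hint
  have hC : 0 < (D + 1) * (2 * (Lψ * (N + 1))) := by positivity
  refine ⟨_, fun f hf => orliczNormE_fracMaximal_le_of_unit_modular hC (fun g hg hmod => ?_) hf⟩
  obtain ⟨G, hG, hle⟩ := hDN g hg hmod
  refine orliczNormE_le_of_le_leftInv hψ.isPhi (fun x => ?_) hLψ (by positivity) le_add_self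
    (hG.trans ?_) (hle.mono fun x hx => hx.trans ?_)
  · simpa only [AlmostInc, ENNReal.rpow_one] using hincψ x (mem_univ x)
  · exact ENNReal.coe_le_coe.2 le_self_add
  · gcongr
    exact le_self_add

/-- boundedness of the fractional maximal operator
`M_α : L^φ(ℝⁿ) → L^ψ(ℝⁿ)` under the fractional assumptions. -/
theorem statement6 {n : ℕ} (hn : 0 < n) (p q α r : ℝ)
    (φ ψ : RSp n → ℝ≥0 → ℝ≥0∞)
    (hp : 1 < p) (hpq : p ≤ q) (hα : α / (n : ℝ) = 1 / p - 1 / q)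
    (hφ : IsWeakPhi Set.univ φ) (hψ : IsWeakPhi Set.univ ψ)
    (hinv : FracInvRel α φ ψ)
    (hr₁ : α / (n : ℝ) < r) (hr₂ : r ≤ 1 / p)
    (ha0 : A0 Set.univ φ) (ha1 : A1 φ) (ha2 : A2 φ)
    (hainc : AInc p Set.univ φ) (hadec : ADec (1 / r) Set.univ φ) :
    ∃ C : ℝ≥0, ∀ f : RSp n → ℝ, MemOrlicz φ Set.univ f →
      orliczNormE ψ Set.univ (fracMaximal α f) ≤
        (C : ℝ≥0∞) * orliczNorm φ Set.univ f := by
  have hα0 : 0 ≤ α / (n : ℝ) :=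
    hα ▸ sub_nonneg.2 (one_div_le_one_div_of_le (one_pos.trans hp) hpq)
  obtain ⟨C, hC⟩ := statement6_general hn p α φ ψ hp hα0 (hr₁.le.trans hr₂) hφ hψ hinv ha0 ha1 ha2
    hainc
  exact ⟨C, fun f hf => hC f (by simpa only [Measure.restrict_univ] using hf.1)⟩
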